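/- arXiv:1909.06193 — 2 statements merged into one kernel-verified Lean document; each statement's English description precedes it below -/
import Mathlib

section
/- (Proposition 6.) Let μ and ν be random Borel probability measures on the cube [0,1]^d (defined on some probability space) such that E( |f_μ(πm) − f_ν(πm)|² ) ≤ δ² for all m ∈ ℤ^d, where 0 < δ ≤ 2 and f_μ(ξ) = ∫ e^{i⟨ξ,x⟩} dμ(x) is the characteristic function of μ. Then E(W₁(μ,ν)) ≤ δ if d = 1; E(W₁(μ,ν)) ≤ 5δ·√(1 + log(4/δ²)) if d = 2; and E(W₁(μ,ν)) ≤ 10√d · δ^{2/d} if d ≥ 3. -/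
open MeasureTheory Real ENNReal

noncomputable section

/-- Euclidean distance on `Fin d → ℝ`. -/
def euclidDist {d : ℕ} (x y : Fin d → ℝ) : ℝ := Real.sqrt (∑ i, (x i - y i) ^ 2)

/-- `γ` is a coupling of `μ` and `ν`. -/
def IsCoupling {α : Type*} [MeasurableSpace α]
    (γ : Measure (α × α)) (μ ν : Measure α) : Prop :=
  γ.map Prod.fst = μ ∧ γ.map Prod.snd = ν

/-- Optimal transport cost for a cost function `c`. -/
def transportCost {α : Type*} [MeasurableSpace α] (c : α → α → ℝ)
    (μ ν : Measure α) : ℝ≥0∞ :=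
  ⨅ (γ : Measure (α × α)) (_ : IsCoupling γ μ ν),
    ∫⁻ p, ENNReal.ofReal (c p.1 p.2) ∂γ

/-- Euclidean Kantorovich distance `W₁`. -/
def W1 {d : ℕ} (μ ν : Measure (Fin d → ℝ)) : ℝ≥0∞ := transportCost euclidDist μ ν

/-- The characteristic function of `μ` at `ξ ∈ ℝ^d`. -/
def charFun {d : ℕ} (μ : Measure (Fin d → ℝ)) (ξ : Fin d → ℝ) : ℂ :=
  ∫ x, Complex.exp (Complex.I * ∑ i, (ξ i : ℂ) * (x i : ℂ)) ∂μ

/-!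
By Kantorovich duality it suffices to bound `∫ h d(μ - ν)` for 1-Lipschitz functions `h`, uniformly
in `h`. Reflecting in the coordinate hyperplanes folds the torus `(ℝ/2ℤ)^d` onto the cube `[0,1]^d`,
so `h` becomes a 1-Lipschitz function on that torus, whose characters restrict to
`x ↦ e^{iπ⟨m,x⟩}`. Convolving with a Fejér–Korovkin kernel of degree `n` truncates the Fourier
series of `h` to `[-n,n]^d` at the price of an error `O(√d / n)`. The Fourier coefficients `a m` of
`h` satisfy `∑ |m|² |a m|² = O(d)`, by Parseval for its difference quotients, so Cauchy–Schwarz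
bounds the truncated part by `O(√d)` times `(∑ |f_μ(πm) - f_ν(πm)|² / |m|²)^{1/2}`, whose
expectation is at most `δ (∑ 1 / |m|²)^{1/2}`, the sums running over `0 ≠ m ∈ [-n,n]^d`.
It remains to choose `n`.
-/

section Compact

variable {X : Type*} [TopologicalSpace X] [CompactSpace X] [MeasurableSpace X]

lemma integrable_of_continuous [OpensMeasurableSpace X] {E : Type*} [NormedAddCommGroup E]
    {μ : Measure X} [IsFiniteMeasure μ] {f : X → E} (hf : Continuous f) : Integrable f μ :=
  hf.integrable_of_hasCompactSupport (.of_compactSpace f)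

/-- Integration against a finite measure as a linear functional on the continuous functions on a
compact space. -/
def integralLinearMap [OpensMeasurableSpace X] (μ : Measure X) [IsFiniteMeasure μ] :
    C(X, ℝ) →ₗ[ℝ] ℝ where
  toFun u := ∫ x, u x ∂μ
  map_add' u v :=
    integral_add (integrable_of_continuous u.continuous) (integrable_of_continuous v.continuous)
  map_smul' r u := integral_smul r u

lemma exists_isFiniteMeasure_integral_eq [T2Space X] [BorelSpace X] (Λ : C(X, ℝ) →ₗ[ℝ] ℝ)
    (hΛ : ∀ u : C(X, ℝ), (∀ x, 0 ≤ u x) → 0 ≤ Λ u) :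
    ∃ γ : Measure X, IsFiniteMeasure γ ∧ ∀ u : C(X, ℝ), ∫ x, u x ∂γ = Λ u := by
  let Λc : CompactlySupportedContinuousMap X ℝ →ₗ[ℝ] ℝ :=
    { toFun := fun u => Λ u.toContinuousMap
      map_add' := fun u v => Λ.map_add u.toContinuousMap v.toContinuousMap
      map_smul' := fun r u => Λ.map_smul r u.toContinuousMap }
  let Λp : CompactlySupportedContinuousMap X ℝ →ₚ[ℝ] ℝ :=
    PositiveLinearMap.mk₀ Λc fun u hu => hΛ u.toContinuousMap hu
  exact ⟨RealRMK.rieszMeasure Λp, inferInstance, fun u =>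
    RealRMK.integral_rieszMeasure Λp (CompactlySupportedContinuousMap.continuousMapEquiv u)⟩

end Compact

section Duality

variable {X Y : Type*} [TopologicalSpace X] [TopologicalSpace Y]

/-- The linear map `(f, g) ↦ f ⊕ g`, where `(f ⊕ g) (x, y) = f x + g y`; the inequality
`f ⊕ g ≤ c` is the constraint of the Kantorovich dual problem. -/
def directSum : C(X, ℝ) × C(Y, ℝ) →ₗ[ℝ] C(X × Y, ℝ) :=
  LinearMap.coprod (ContinuousMap.compRightAlgHom ℝ ℝ ContinuousMap.fst).toLinearMap
    (ContinuousMap.compRightAlgHom ℝ ℝ ContinuousMap.snd).toLinearMap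

lemma directSum_apply (f : C(X, ℝ)) (g : C(Y, ℝ)) (p : X × Y) :
    directSum (f, g) p = f p.1 + g p.2 := rfl

/-- The cone of functions lying above a nonnegative multiple of `w`, that is, the cone generated
by `w` and the nonnegative functions. -/
def coneAbove (w : C(X, ℝ)) : PointedCone ℝ C(X, ℝ) where
  carrier := {u | ∃ t : ℝ, 0 ≤ t ∧ ∀ x, t * w x ≤ u x}
  add_mem' := by
    rintro u v ⟨s, hs, hu⟩ ⟨t, ht, hv⟩
    exact ⟨s + t, add_nonneg hs ht, fun x =>
      (add_mul s t (w x)).trans_le (add_le_add (hu x) (hv x))⟩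
  zero_mem' := ⟨0, le_rfl, fun x => (zero_mul (w x)).le⟩
  smul_mem' := by
    rintro ⟨r, hr⟩ u ⟨t, ht, hu⟩
    exact ⟨r * t, mul_nonneg hr ht, fun x =>
      (mul_assoc r t (w x)).trans_le (mul_le_mul_of_nonneg_left (hu x) hr)⟩

lemma mem_coneAbove_of_nonneg (w : C(X, ℝ)) {u : C(X, ℝ)} (hu : ∀ x, 0 ≤ u x) :
    u ∈ coneAbove w :=
  ⟨0, le_rfl, fun x => (zero_mul (w x)).trans_le (hu x)⟩

lemma self_mem_coneAbove (w : C(X, ℝ)) : w ∈ coneAbove w :=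
  ⟨1, zero_le_one, fun x => (one_mul (w x)).le⟩

variable [CompactSpace X] [CompactSpace Y] [MeasurableSpace X] [MeasurableSpace Y]
  [SecondCountableTopology X] [SecondCountableTopology Y]
  {μ : Measure X} {ν : Measure Y} [IsProbabilityMeasure μ] [IsProbabilityMeasure ν]
  {c : C(X × Y, ℝ)} {D : ℝ}

section Extension

variable [OpensMeasurableSpace X] [OpensMeasurableSpace Y]

lemma integralLinearMap_prod_directSum (f : C(X, ℝ)) (g : C(Y, ℝ)) :
    integralLinearMap (μ.prod ν) (directSum (f, g)) = ∫ x, f x ∂μ + ∫ y, g y ∂ν := by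
  change ∫ p, (f p.1 + g p.2) ∂μ.prod ν = _
  rw [integral_add (integrable_of_continuous (by fun_prop))
    (integrable_of_continuous (by fun_prop)), integral_fun_fst, integral_fun_snd]
  simp

lemma integralLinearMap_directSum_nonneg
    (hD : ∀ (f : C(X, ℝ)) (g : C(Y, ℝ)), (∀ x y, f x + g y ≤ c (x, y)) →
      ∫ x, f x ∂μ + ∫ y, g y ∂ν ≤ D)
    {f : C(X, ℝ)} {g : C(Y, ℝ)}
    (hfg : directSum (f, g) ∈ coneAbove (ContinuousMap.const _ D - c)) :
    0 ≤ integralLinearMap (μ.prod ν) (directSum (f, g)) := by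
  obtain ⟨t, ht, hle⟩ := hfg
  rcases ht.eq_or_lt with rfl | ht
  · exact integral_nonneg fun p => (zero_mul _).symm.trans_le (hle p)
  -- The pair `(D - t⁻¹ f, -t⁻¹ g)` is admissible for the dual problem, and its value being at most
  -- `D` says that `f ⊕ g` has nonnegative integral.
  have hadm (x : X) (y : Y) : (.const X D - t⁻¹ • f) x + (-(t⁻¹ • g)) y ≤ c (x, y) := by
    have h : D - c (x, y) ≤ t⁻¹ * (f x + g y) := (le_inv_mul_iff₀ ht).2 (hle (x, y))
    simp only [ContinuousMap.sub_apply, ContinuousMap.const_apply, ContinuousMap.smul_apply,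
      ContinuousMap.neg_apply, smul_eq_mul]
    linarith
  have hsplit : directSum (.const X D - t⁻¹ • f, -(t⁻¹ • g))
      = directSum (.const X D, 0) - t⁻¹ • directSum (f, g) := by
    rw [← map_smul, ← map_sub, Prod.smul_mk, Prod.mk_sub_mk, zero_sub]
  have hdual := hD _ _ hadm
  rw [← integralLinearMap_prod_directSum, hsplit, map_sub, map_smul,
    integralLinearMap_prod_directSum, smul_eq_mul] at hdual
  simp only [ContinuousMap.const_apply, integral_const, probReal_univ, one_smul,
    ContinuousMap.zero_apply, add_zero] at hdual
  exact nonneg_of_mul_nonneg_right (by linarith) (inv_pos.2 ht)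

lemma exists_linearMap_of_forall_dual_le
    (hD : ∀ (f : C(X, ℝ)) (g : C(Y, ℝ)), (∀ x y, f x + g y ≤ c (x, y)) →
      ∫ x, f x ∂μ + ∫ y, g y ∂ν ≤ D) :
    ∃ Λ : C(X × Y, ℝ) →ₗ[ℝ] ℝ, (∀ u : C(X × Y, ℝ), (∀ p, 0 ≤ u p) → 0 ≤ Λ u) ∧
      (∀ f g, Λ (directSum (f, g)) = ∫ x, f x ∂μ + ∫ y, g y ∂ν) ∧ Λ c ≤ D := by
  obtain ⟨Λ, hext, hnonneg⟩ := riesz_extension (coneAbove (.const (X × Y) D - c))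
    ⟨LinearMap.range directSum, (integralLinearMap (μ.prod ν)).domRestrict _⟩
    (by rintro ⟨_, ⟨f, g⟩, rfl⟩ hu; exact integralLinearMap_directSum_nonneg hD hu)
    (fun u => ⟨⟨_, (.const X ‖u‖, 0), rfl⟩, mem_coneAbove_of_nonneg _ fun p => by
      change 0 ≤ ‖u‖ + 0 + u p
      linarith [neg_le_of_abs_le (u.norm_coe_le_norm p)]⟩)
  have hmarginals (f g) : Λ (directSum (f, g)) = ∫ x, f x ∂μ + ∫ y, g y ∂ν :=
    (hext ⟨_, (f, g), rfl⟩).trans (integralLinearMap_prod_directSum f g)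
  refine ⟨Λ, fun u hu => hnonneg u (mem_coneAbove_of_nonneg _ hu), hmarginals, ?_⟩
  have hconst : Λ (.const _ D) = D := by
    have h : directSum (.const X D, (0 : C(Y, ℝ))) = .const _ D := by ext; simp [directSum_apply]
    simpa [h] using hmarginals (.const X D) 0
  have h := hnonneg _ (self_mem_coneAbove _)
  rwa [map_sub, hconst, sub_nonneg] at h

end Extension

theorem exists_coupling_integral_le [T2Space X] [T2Space Y] [BorelSpace X] [BorelSpace Y]
    (hD : ∀ (f : C(X, ℝ)) (g : C(Y, ℝ)), (∀ x y, f x + g y ≤ c (x, y)) →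
      ∫ x, f x ∂μ + ∫ y, g y ∂ν ≤ D) :
    ∃ γ : Measure (X × Y), γ.map Prod.fst = μ ∧ γ.map Prod.snd = ν ∧ IsFiniteMeasure γ ∧
      ∫ p, c p ∂γ ≤ D := by
  obtain ⟨Λ, hnonneg, hmarginals, hcost⟩ := exists_linearMap_of_forall_dual_le hD
  obtain ⟨γ, hγ, hrepr⟩ := exists_isFiniteMeasure_integral_eq Λ hnonneg
  have hintegral (f : C(X, ℝ)) (g : C(Y, ℝ)) :
      ∫ p, (f p.1 + g p.2) ∂γ = ∫ x, f x ∂μ + ∫ y, g y ∂ν :=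
    (hrepr (directSum (f, g))).trans (hmarginals f g)
  refine ⟨γ, ?_, ?_, hγ, (hrepr c).trans_le hcost⟩ <;>
    refine ext_of_forall_integral_eq_of_IsFiniteMeasure fun f => ?_
  · rw [integral_map measurable_fst.aemeasurable f.continuous.aestronglyMeasurable]
    simpa using hintegral f.toContinuousMap 0
  · rw [integral_map measurable_snd.aemeasurable f.continuous.aestronglyMeasurable]
    simpa using hintegral 0 f.toContinuousMap

end Duality

section TransportCost

lemma transportCost_le_lintegral {α : Type*} [MeasurableSpace α] {μ ν : Measure α}
    {γ : Measure (α × α)} (hγ : IsCoupling γ μ ν) (c : α → α → ℝ) :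
    transportCost c μ ν ≤ ∫⁻ p, ENNReal.ofReal (c p.1 p.2) ∂γ :=
  iInf₂_le γ hγ

lemma transportCost_map_le {α β : Type*} [MeasurableSpace α] [MeasurableSpace β] {f : α → β}
    (hf : Measurable f) {c : β → β → ℝ} (hc : Measurable fun p : β × β => c p.1 p.2)
    (μ ν : Measure α) :
    transportCost c (μ.map f) (ν.map f) ≤ transportCost (fun x y => c (f x) (f y)) μ ν := by
  refine le_iInf₂ fun γ hγ => ?_
  have hcoupling : IsCoupling (γ.map (Prod.map f f)) (μ.map f) (ν.map f) := by
    rw [← hγ.1, ← hγ.2, IsCoupling, Measure.map_map measurable_fst (hf.prodMap hf),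
      Measure.map_map measurable_snd (hf.prodMap hf), Measure.map_map hf measurable_fst,
      Measure.map_map hf measurable_snd]
    exact ⟨rfl, rfl⟩
  calc transportCost c (μ.map f) (ν.map f)
      ≤ ∫⁻ p, ENNReal.ofReal (c p.1 p.2) ∂γ.map (Prod.map f f) :=
        transportCost_le_lintegral hcoupling c
    _ = ∫⁻ p, ENNReal.ofReal (c (f p.1) (f p.2)) ∂γ :=
        lintegral_map hc.ennreal_ofReal (hf.prodMap hf)

variable {X : Type*} [TopologicalSpace X]

lemma exists_continuous_between_potentials [Nonempty X] {c : C(X × X, ℝ)}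
    (hrefl : ∀ x, c (x, x) = 0) (hsymm : ∀ x y, c (x, y) = c (y, x))
    (htri : ∀ x y z, c (x, z) ≤ c (x, y) + c (y, z)) {f g : X → ℝ}
    (hfg : ∀ x y, f x + g y ≤ c (x, y)) :
    ∃ h : C(X, ℝ), (∀ x y, h x - h y ≤ c (x, y)) ∧ (∀ x, f x ≤ h x) ∧ ∀ x, g x ≤ -h x := by
  have hbdd (x) : BddBelow (Set.range fun y => c (x, y) - g y) :=
    ⟨f x, Set.forall_mem_range.2 fun y => le_sub_right_of_add_le (hfg x y)⟩
  -- The `c`-transform of `g`.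
  let h : X → ℝ := fun x => ⨅ y, c (x, y) - g y
  have hle (x y : X) : h x ≤ c (x, y) - g y := ciInf_le (hbdd x) y
  have hlip (x y : X) : h x - h y ≤ c (x, y) := by
    rw [sub_le_comm]
    exact le_ciInf fun z => by linarith [hle x z, htri x y z]
  have hcont : Continuous h := continuous_iff_continuousAt.2 fun x => by
    have hc : Filter.Tendsto (fun y => c (y, x)) (nhds x) (nhds 0) :=
      hrefl x ▸ Continuous.tendsto (by fun_prop) x
    refine tendsto_iff_dist_tendsto_zero.2 (squeeze_zero (fun _ => dist_nonneg) (fun y => ?_) hc)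
    exact abs_sub_le_iff.2 ⟨hlip y x, (hlip x y).trans_eq (hsymm x y)⟩
  refine ⟨⟨h, hcont⟩, hlip, fun x => le_ciInf fun y => by linarith [hfg x y], fun x => ?_⟩
  change g x ≤ -h x
  linarith [hle x x, hrefl x]

theorem transportCost_le_of_forall_integral_sub_le [CompactSpace X] [T2Space X]
    [SecondCountableTopology X] [MeasurableSpace X] [BorelSpace X] {μ ν : Measure X}
    [IsProbabilityMeasure μ] [IsProbabilityMeasure ν] {c : X → X → ℝ}
    (hcont : Continuous fun p : X × X => c p.1 p.2)
    (hrefl : ∀ x, c x x = 0) (hsymm : ∀ x y, c x y = c y x)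
    (htri : ∀ x y z, c x z ≤ c x y + c y z) {D : ℝ}
    (hD : ∀ h : C(X, ℝ), (∀ x y, h x - h y ≤ c x y) → ∫ x, h x ∂μ - ∫ x, h x ∂ν ≤ D) :
    transportCost c μ ν ≤ ENNReal.ofReal D := by
  have : Nonempty X := nonempty_of_isProbabilityMeasure μ
  have hnonneg (x y : X) : 0 ≤ c x y := by linarith [htri x y x, hsymm x y, hrefl x]
  obtain ⟨γ, hfst, hsnd, hγ, hcost⟩ := exists_coupling_integral_le (μ := μ) (ν := ν) (D := D)
    (c := ⟨fun p => c p.1 p.2, hcont⟩) fun f g hfg => by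
      obtain ⟨h, hlip, hf, hg⟩ := exists_continuous_between_potentials hrefl hsymm htri hfg
      calc ∫ x, f x ∂μ + ∫ x, g x ∂ν
          ≤ ∫ x, h x ∂μ + ∫ x, -h x ∂ν :=
            add_le_add
              (integral_mono (integrable_of_continuous f.continuous)
                (integrable_of_continuous h.continuous) hf)
              (integral_mono (integrable_of_continuous g.continuous)
                (integrable_of_continuous h.continuous.neg) hg)
        _ = ∫ x, h x ∂μ - ∫ x, h x ∂ν := by rw [integral_neg, sub_eq_add_neg]
        _ ≤ D := hD h hlip
  calc transportCost c μ ν ≤ ∫⁻ p, ENNReal.ofReal (c p.1 p.2) ∂γ :=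
        transportCost_le_lintegral ⟨hfst, hsnd⟩ c
    _ = ENNReal.ofReal (∫ p, c p.1 p.2 ∂γ) :=
        (ofReal_integral_eq_lintegral_ofReal (integrable_of_continuous hcont)
          (.of_forall fun p => hnonneg p.1 p.2)).symm
    _ ≤ ENNReal.ofReal D := ENNReal.ofReal_le_ofReal hcost

end TransportCost

lemma integral_mul_le_sqrt_integral_sq_mul {α : Type*} [MeasurableSpace α] {μ : Measure α}
    {q K : α → ℝ} (hK : ∀ x, 0 ≤ K x) (hK1 : ∫ x, K x ∂μ = 1)
    (hqK : Integrable (fun x => q x * K x) μ) (hq2K : Integrable (fun x => q x ^ 2 * K x) μ) :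
    ∫ x, q x * K x ∂μ ≤ √(∫ x, q x ^ 2 * K x ∂μ) := by
  set s := ∫ x, q x * K x ∂μ
  have hKint : Integrable K μ := integrable_of_integral_eq_one hK1
  have hvariance : ∫ x, (q x - s) ^ 2 * K x ∂μ = ∫ x, q x ^ 2 * K x ∂μ - s ^ 2 := by
    have hexpand (x : α) :
        (q x - s) ^ 2 * K x = q x ^ 2 * K x - 2 * s * (q x * K x) + s ^ 2 * K x := by ring
    have hsub : Integrable (fun x => q x ^ 2 * K x - 2 * s * (q x * K x)) μ :=
      hq2K.sub (hqK.const_mul _)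
    simp only [hexpand]
    rw [integral_add hsub (hKint.const_mul _),
      integral_sub hq2K (hqK.const_mul _), integral_const_mul, integral_const_mul, hK1]
    ring
  have hnonneg : 0 ≤ ∫ x, (q x - s) ^ 2 * K x ∂μ :=
    integral_nonneg fun x => mul_nonneg (sq_nonneg _) (hK x)
  exact Real.le_sqrt_of_sq_le (by linarith)

section Torus

attribute [local instance] instMeasureSpaceUnitAddCircle
  instIsAddHaarMeasureUnitAddCircleVolume instIsProbabilityMeasureUnitAddCircleVolume

variable {ι : Type*} [Fintype ι]

open UnitAddTorus

lemma mFourier_apply_add (m : ι → ℤ) (z w : UnitAddTorus ι) :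
    mFourier m (z + w) = mFourier m z * mFourier m w := by
  simp [mFourier, fourier_apply, AddCircle.toCircle_add, Finset.prod_mul_distrib]

lemma mFourier_apply_neg (m : ι → ℤ) (z : UnitAddTorus ι) :
    mFourier m (-z) = mFourier (-m) z := by
  simp [mFourier, fourier_apply]

lemma mFourier_apply_single [DecidableEq ι] (m : ι → ℤ) (i : ι) (t : ℝ) :
    mFourier m (Pi.single i (t : UnitAddCircle)) = Complex.exp (2 * π * Complex.I * m i * t) := by
  change ∏ j, fourier (m j) ((Pi.single i (t : UnitAddCircle) : UnitAddTorus ι) j) = _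
  rw [Finset.prod_eq_single i (fun j _ hj => by rw [Pi.single_eq_of_ne hj, fourier_eval_zero])
    (by simp), Pi.single_eq_same, fourier_coe_apply, Complex.ofReal_one, div_one]

lemma mFourierCoeff_sub {f g : UnitAddTorus ι → ℂ} (hf : Continuous f) (hg : Continuous g)
    (m : ι → ℤ) :
    mFourierCoeff (fun z => f z - g z) m = mFourierCoeff f m - mFourierCoeff g m := by
  simp only [mFourierCoeff, smul_sub]
  exact integral_sub (integrable_of_continuous (by fun_prop))
    (integrable_of_continuous (by fun_prop))

lemma mFourierCoeff_comp_add_right (f : UnitAddTorus ι → ℂ) (w : UnitAddTorus ι) (m : ι → ℤ) :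
    mFourierCoeff (fun z => f (z + w)) m = mFourier m w * mFourierCoeff f m := by
  have hcancel : mFourier m w * mFourier (-m) w = 1 := by
    rw [← mFourier_add, add_neg_cancel, mFourier_zero, ContinuousMap.one_apply]
  simp only [mFourierCoeff, smul_eq_mul]
  rw [← integral_const_mul,
    ← integral_add_right_eq_self (fun z => mFourier m w * (mFourier (-m) z * f z)) w]
  refine integral_congr_ae (.of_forall fun z => ?_)
  simp only [mFourier_apply_add]
  linear_combination -(mFourier (-m) z * f (z + w)) * hcancel

lemma sum_sq_norm_mFourierCoeff_le {f : UnitAddTorus ι → ℂ} (hf : Continuous f) {C : ℝ}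
    (hC : ∀ z, ‖f z‖ ≤ C) (F : Finset (ι → ℤ)) : ∑ m ∈ F, ‖mFourierCoeff f m‖ ^ 2 ≤ C ^ 2 := by
  have hparseval := hasSum_sq_mFourierCoeff (ContinuousMap.toLp 2 volume ℂ ⟨f, hf⟩)
  simp only [mFourierCoeff_toLp] at hparseval
  calc ∑ m ∈ F, ‖mFourierCoeff f m‖ ^ 2
      ≤ ∫ z, ‖ContinuousMap.toLp 2 volume ℂ ⟨f, hf⟩ z‖ ^ 2 :=
        sum_le_hasSum F (fun _ _ => sq_nonneg _) hparseval
    _ = ∫ z, ‖f z‖ ^ 2 := by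
        refine integral_congr_ae ?_
        filter_upwards [ContinuousMap.coeFn_toLp (p := 2) (𝕜 := ℂ) volume ⟨f, hf⟩] with z hz
        rw [hz, ContinuousMap.coe_mk]
    _ ≤ ∫ _ : UnitAddTorus ι, C ^ 2 :=
        integral_mono (integrable_of_continuous (by fun_prop)) (integrable_const _)
          fun z => pow_le_pow_left₀ (norm_nonneg _) (hC z) 2
    _ = C ^ 2 := by simp

lemma sum_sq_mul_sq_norm_mFourierCoeff_le [DecidableEq ι] {f : UnitAddTorus ι → ℂ}
    (hf : Continuous f) {L : ℝ} {i : ι}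
    (hL : ∀ z (t : ℝ), ‖f (z + Pi.single i (t : UnitAddCircle)) - f z‖ ≤ L * |t|)
    (F : Finset (ι → ℤ)) :
    ∑ m ∈ F, (2 * π * m i) ^ 2 * ‖mFourierCoeff f m‖ ^ 2 ≤ L ^ 2 := by
  -- Bessel's inequality for the difference quotients of `f` in direction `i`; then let `t → 0`.
  let quotient (m : ι → ℤ) (t : ℝ) : ℂ := t⁻¹ • (Complex.exp (2 * π * Complex.I * m i * t) - 1)
  have hbessel (t : ℝ) (ht : t ≠ 0) :
      ∑ m ∈ F, ‖quotient m t‖ ^ 2 * ‖mFourierCoeff f m‖ ^ 2 ≤ L ^ 2 := by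
    have hdiff (m : ι → ℤ) : ‖quotient m t‖ ^ 2 * ‖mFourierCoeff f m‖ ^ 2
        = (t ^ 2)⁻¹ * ‖mFourierCoeff
            (fun z => f (z + Pi.single i (t : UnitAddCircle)) - f z) m‖ ^ 2 := by
      rw [mFourierCoeff_sub (by fun_prop) hf, mFourierCoeff_comp_add_right, mFourier_apply_single,
        ← sub_one_mul, norm_mul, norm_smul, norm_inv, Real.norm_eq_abs, mul_pow, mul_pow, inv_pow,
        sq_abs, mul_assoc]
    simp only [hdiff, ← Finset.mul_sum]
    rw [inv_mul_le_iff₀ (by positivity), mul_comm, ← sq_abs t, ← mul_pow]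
    exact sum_sq_norm_mFourierCoeff_le (by fun_prop) (hL · t) F
  have htendsto (m : ι → ℤ) : Filter.Tendsto (fun t => ‖quotient m t‖ ^ 2) (nhdsWithin 0 {0}ᶜ)
      (nhds ((2 * π * m i) ^ 2)) := by
    have hderiv : HasDerivAt (fun t : ℝ => Complex.exp (2 * π * Complex.I * m i * t))
        (2 * π * Complex.I * m i) 0 := by
      simpa using ((Complex.ofRealCLM.hasDerivAt (x := 0)).const_mul (2 * π * Complex.I * m i)).cexp
    have hnorm : ‖2 * π * Complex.I * m i‖ ^ 2 = (2 * π * m i) ^ 2 := by simp [mul_pow]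
    rw [← hnorm]
    simpa only [zero_add, Complex.ofReal_zero, mul_zero, Complex.exp_zero] using
      hderiv.tendsto_slope_zero.norm.pow 2
  exact le_of_tendsto (tendsto_finsetSum F fun m _ => (htendsto m).mul_const _)
    (eventually_nhdsWithin_of_forall hbessel)

/-- The Euclidean length of the shortest lift of `w` to `ℝ^ι`. The norm that `ι → UnitAddCircle`
carries in Mathlib is the supremum norm. -/
def torusNorm (w : UnitAddTorus ι) : ℝ := √(∑ i, ‖w i‖ ^ 2)

lemma torusNorm_nonneg (w : UnitAddTorus ι) : 0 ≤ torusNorm w := Real.sqrt_nonneg _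

lemma sq_torusNorm (w : UnitAddTorus ι) : torusNorm w ^ 2 = ∑ i, ‖w i‖ ^ 2 :=
  Real.sq_sqrt (Finset.sum_nonneg fun _ _ => sq_nonneg _)

lemma continuous_torusNorm : Continuous (torusNorm : UnitAddTorus ι → ℝ) := by
  unfold torusNorm
  fun_prop

lemma torusNorm_single_le [DecidableEq ι] (i : ι) (t : ℝ) :
    torusNorm (Pi.single i (t : UnitAddCircle)) ≤ |t| := by
  rw [torusNorm, Finset.sum_eq_single i (fun j _ hj => by simp [Pi.single_eq_of_ne hj]) (by simp),
    Pi.single_eq_same, Real.sqrt_sq (norm_nonneg _)]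
  exact QuotientAddGroup.norm_mk_le_norm

/-- The squared Euclidean length `|m|²` of a frequency `m ∈ ℤ^ι`. -/
def freqNormSq (m : ι → ℤ) : ℝ := ∑ i, (m i : ℝ) ^ 2

lemma freqNormSq_nonneg (m : ι → ℤ) : 0 ≤ freqNormSq m := Finset.sum_nonneg fun _ _ => sq_nonneg _

lemma freqNormSq_pos {m : ι → ℤ} (hm : m ≠ 0) : 0 < freqNormSq m := by
  obtain ⟨i, hi⟩ := Function.ne_iff.1 hm
  exact Finset.sum_pos' (fun _ _ => sq_nonneg _)
    ⟨i, Finset.mem_univ i, sq_pos_of_ne_zero (Int.cast_ne_zero.2 hi)⟩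

lemma sum_freqNormSq_mul_sq_norm_mFourierCoeff_le {f : UnitAddTorus ι → ℂ} (hf : Continuous f)
    {L : ℝ} (hL : 0 ≤ L) (hLip : ∀ z w, ‖f (z + w) - f z‖ ≤ L * torusNorm w)
    (F : Finset (ι → ℤ)) :
    ∑ m ∈ F, freqNormSq m * ‖mFourierCoeff f m‖ ^ 2 ≤ (√(Fintype.card ι) * L / (2 * π)) ^ 2 := by
  classical
  have hcoord (i : ι) : ∑ m ∈ F, (2 * π * m i) ^ 2 * ‖mFourierCoeff f m‖ ^ 2 ≤ L ^ 2 :=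
    sum_sq_mul_sq_norm_mFourierCoeff_le hf (fun z t => (hLip z _).trans
      (mul_le_mul_of_nonneg_left (torusNorm_single_le i t) hL)) F
  rw [div_pow, mul_pow, Real.sq_sqrt (Nat.cast_nonneg _), le_div_iff₀ (by positivity)]
  calc (∑ m ∈ F, freqNormSq m * ‖mFourierCoeff f m‖ ^ 2) * (2 * π) ^ 2
      = ∑ i, ∑ m ∈ F, (2 * π * m i) ^ 2 * ‖mFourierCoeff f m‖ ^ 2 := by
        simp only [freqNormSq, mul_pow, Finset.sum_mul]
        rw [Finset.sum_comm]
        exact Finset.sum_congr rfl fun i _ => Finset.sum_congr rfl fun m _ => by ring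
    _ ≤ ∑ _ : ι, L ^ 2 := Finset.sum_le_sum fun i _ => hcoord i
    _ = Fintype.card ι * L ^ 2 := by simp

lemma integral_fourier (k : ℤ) :
    ∫ y : UnitAddCircle, (fourier k y : ℂ) = if k = 0 then 1 else 0 := by
  have h := orthonormal_iff_ite.1 (orthonormal_fourier (T := 1)) 0 k
  rw [ContinuousMap.inner_toLp] at h
  change ∫ y, (fourier k y : ℂ) ∂AddCircle.haarAddCircle = _
  simpa [eq_comm] using h

lemma eight_mul_sq_norm_le_one_sub_re_fourier (y : UnitAddCircle) :
    8 * ‖y‖ ^ 2 ≤ 1 - (fourier 1 y : ℂ).re := by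
  induction y using QuotientAddGroup.induction_on with | H x =>
  have hre : (fourier 1 (x : UnitAddCircle) : ℂ).re = cos (2 * π * (x - round x)) := by
    rw [fourier_coe_apply, show (2 * π * Complex.I * (1 : ℤ) * x / (1 : ℝ) : ℂ)
      = ((2 * π * x : ℝ) : ℂ) * Complex.I by push_cast; ring, Complex.exp_ofReal_mul_I_re,
      ← Real.cos_sub_int_mul_two_pi _ (round x)]
    congr 1
    ring
  have hcos := Real.cos_le_one_sub_mul_cos_sq (x := 2 * π * (x - round x)) (by
    rw [abs_mul, abs_of_pos (by positivity)]
    nlinarith [pi_pos, abs_sub_round x])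
  have hscale : 2 / π ^ 2 * (2 * π * (x - round x)) ^ 2 = 8 * |x - round x| ^ 2 := by
    rw [sq_abs]
    field_simp
    ring
  rw [UnitAddCircle.norm_eq, hre]
  linarith

/-- The trigonometric polynomial with frequencies in `J` and coefficients `a`. -/
def trigPoly (J : Finset ℤ) (a : ℤ → ℝ) (y : UnitAddCircle) : ℂ := ∑ j ∈ J, (a j : ℂ) * fourier j y

/-- The autocorrelations of a finite sequence; they are the Fourier coefficients of
`‖trigPoly J a‖ ^ 2`. -/
def autocorrelation (J : Finset ℤ) (a : ℤ → ℝ) (k : ℤ) : ℝ :=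
  ∑ q ∈ J ×ˢ J with q.1 - q.2 = k, a q.1 * a q.2

section TrigPoly

variable (J : Finset ℤ) (a : ℤ → ℝ)

lemma continuous_trigPoly : Continuous (trigPoly J a) := by
  unfold trigPoly
  fun_prop

lemma sq_norm_trigPoly (y : UnitAddCircle) :
    ((‖trigPoly J a y‖ ^ 2 : ℝ) : ℂ)
      = ∑ q ∈ J ×ˢ J, ((a q.1 * a q.2 : ℝ) : ℂ) * fourier (q.1 - q.2) y := by
  rw [Complex.ofReal_pow, ← Complex.mul_conj', trigPoly, map_sum, Finset.sum_mul_sum,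
    ← Finset.sum_product']
  refine Finset.sum_congr rfl fun q _ => ?_
  rw [map_mul, Complex.conj_ofReal, sub_eq_add_neg, fourier_add, fourier_neg]
  push_cast
  ring

variable {J} in
lemma sq_norm_trigPoly_eq_sum_autocorrelation {F : Finset ℤ}
    (hF : ∀ j ∈ J, ∀ l ∈ J, j - l ∈ F) (y : UnitAddCircle) :
    ((‖trigPoly J a y‖ ^ 2 : ℝ) : ℂ) = ∑ k ∈ F, (autocorrelation J a k : ℂ) * fourier k y := by
  rw [sq_norm_trigPoly, ← Finset.sum_fiberwise_of_maps_to (t := F) (g := fun q => q.1 - q.2)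
    fun q hq => hF _ (Finset.mem_product.1 hq).1 _ (Finset.mem_product.1 hq).2]
  refine Finset.sum_congr rfl fun k _ => ?_
  rw [autocorrelation, Complex.ofReal_sum, Finset.sum_mul]
  exact Finset.sum_congr rfl fun q hq => by rw [(Finset.mem_filter.1 hq).2]

lemma integral_re_fourier_mul_sq_norm_trigPoly (k : ℤ) :
    ∫ y, (fourier k y : ℂ).re * ‖trigPoly J a y‖ ^ 2 = autocorrelation J a k := by
  have hcont := continuous_trigPoly J a
  have hcoeff : ∫ y, (fourier (-k) y : ℂ) * ((‖trigPoly J a y‖ ^ 2 : ℝ) : ℂ)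
      = autocorrelation J a k := by
    have hexpand (y : UnitAddCircle) : (fourier (-k) y : ℂ) * ((‖trigPoly J a y‖ ^ 2 : ℝ) : ℂ)
        = ∑ q ∈ J ×ˢ J, ((a q.1 * a q.2 : ℝ) : ℂ) * fourier (q.1 - q.2 - k) y := by
      rw [sq_norm_trigPoly, Finset.mul_sum]
      refine Finset.sum_congr rfl fun q _ => ?_
      rw [sub_eq_add_neg (q.1 - q.2), fourier_add]
      ring
    simp only [hexpand]
    rw [integral_finsetSum _ fun q _ => integrable_of_continuous (by fun_prop), autocorrelation,
      Finset.sum_filter, Complex.ofReal_sum]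
    refine Finset.sum_congr rfl fun q _ => ?_
    rw [integral_const_mul, integral_fourier]
    simp only [sub_eq_zero]
    split_ifs <;> simp
  rw [← Complex.ofReal_re (autocorrelation J a k), ← hcoeff, ← Complex.reCLM_apply,
    ← Complex.reCLM.integral_comp_comm (integrable_of_continuous (by fun_prop))]
  exact integral_congr_ae (.of_forall fun y => by simp [-Complex.ofReal_pow])

lemma integral_sq_norm_trigPoly : ∫ y, ‖trigPoly J a y‖ ^ 2 = autocorrelation J a 0 := by
  simpa using integral_re_fourier_mul_sq_norm_trigPoly J a 0

lemma abs_autocorrelation_le (k : ℤ) : |autocorrelation J a k| ≤ autocorrelation J a 0 := by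
  have hcont := continuous_trigPoly J a
  rw [← integral_re_fourier_mul_sq_norm_trigPoly J a k, ← integral_sq_norm_trigPoly]
  refine abs_integral_le_integral_abs.trans (integral_mono (integrable_of_continuous (by fun_prop))
    (integrable_of_continuous (by fun_prop)) fun y => ?_)
  have hre : |(fourier k y : ℂ).re| ≤ 1 := by
    simpa only [fourier_apply, Circle.norm_coe] using Complex.abs_re_le_norm (fourier k y)
  simpa [abs_mul] using mul_le_mul_of_nonneg_right hre (sq_nonneg ‖trigPoly J a y‖)

lemma autocorrelation_neg (k : ℤ) : autocorrelation J a (-k) = autocorrelation J a k := by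
  rw [← integral_re_fourier_mul_sq_norm_trigPoly, ← integral_re_fourier_mul_sq_norm_trigPoly]
  simp only [fourier_neg, Complex.conj_re]

variable {J a} in
lemma autocorrelation_eq_sum {k : ℤ} (h : ∀ j ∈ J, j - k ∉ J → a (j - k) = 0) :
    autocorrelation J a k = ∑ j ∈ J, a j * a (j - k) := by
  rw [autocorrelation, Finset.sum_filter, Finset.sum_product]
  refine Finset.sum_congr rfl fun j hj => ?_
  simp only [sub_eq_iff_comm (a := j), Finset.sum_ite_eq]
  split_ifs with hmem
  · rfl
  · rw [h j hj hmem, mul_zero]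

end TrigPoly

section KorovkinKernel

/-- The coefficients of the polynomial whose squared modulus is the Fejér–Korovkin kernel of
degree `n`. They vanish at both ends `0` and `n + 2` of the frequency window, and they form an
eigenvector of the discrete Laplacian there, which makes the first Fourier coefficient of the
kernel as large as possible. -/
def korovkinWeight (n : ℕ) (j : ℤ) : ℝ := sin (j * (π / (n + 2)))

/-- The squared `L²` norm of the polynomial defining the Fejér–Korovkin kernel. -/
def korovkinMass (n : ℕ) : ℝ := autocorrelation (Finset.Icc 1 (n + 1)) (korovkinWeight n) 0

/-- The Fejér–Korovkin kernel of degree `n`, normalised to have integral `1`. -/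
def korovkinKernel (n : ℕ) (y : UnitAddCircle) : ℝ :=
  ‖trigPoly (Finset.Icc 1 (n + 1)) (korovkinWeight n) y‖ ^ 2 / korovkinMass n

/-- The Fourier coefficients of the Fejér–Korovkin kernel. -/
def korovkinCoeff (n : ℕ) (k : ℤ) : ℝ :=
  autocorrelation (Finset.Icc 1 (n + 1)) (korovkinWeight n) k / korovkinMass n

variable (n : ℕ)

lemma korovkinMass_pos : 0 < korovkinMass n := by
  rw [korovkinMass, autocorrelation_eq_sum fun j hj h => absurd hj (by simpa using h)]
  simp only [sub_zero]
  refine Finset.sum_pos' (fun j _ => mul_self_nonneg _) ⟨1, by simp, mul_self_pos.2 (ne_of_gt ?_)⟩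
  refine sin_pos_of_pos_of_lt_pi (by positivity) ?_
  rw [Int.cast_one, one_mul]
  exact div_lt_self pi_pos (by linarith [n.cast_nonneg (α := ℝ)])

lemma continuous_korovkinKernel : Continuous (korovkinKernel n) :=
  ((continuous_trigPoly _ _).norm.pow 2).div_const _

lemma korovkinKernel_nonneg (y : UnitAddCircle) : 0 ≤ korovkinKernel n y :=
  div_nonneg (sq_nonneg _) (korovkinMass_pos n).le

lemma korovkinKernel_eq_sum (y : UnitAddCircle) :
    (korovkinKernel n y : ℂ)
      = ∑ k ∈ Finset.Icc (-n : ℤ) n, (korovkinCoeff n k : ℂ) * fourier k y := by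
  have hF (j) (hj : j ∈ Finset.Icc (1 : ℤ) (n + 1)) (l) (hl : l ∈ Finset.Icc (1 : ℤ) (n + 1)) :
      j - l ∈ Finset.Icc (-n : ℤ) n := by
    rw [Finset.mem_Icc] at *
    omega
  simp only [korovkinKernel, korovkinCoeff, Complex.ofReal_div]
  rw [sq_norm_trigPoly_eq_sum_autocorrelation _ hF, Finset.sum_div]
  exact Finset.sum_congr rfl fun k _ => by ring

lemma abs_korovkinCoeff_le_one (k : ℤ) : |korovkinCoeff n k| ≤ 1 := by
  rw [korovkinCoeff, abs_div, abs_of_pos (korovkinMass_pos n)]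
  exact div_le_one_of_le₀ (abs_autocorrelation_le _ _ k) (korovkinMass_pos n).le

lemma integral_korovkinKernel : ∫ y, korovkinKernel n y = 1 := by
  simp only [korovkinKernel]
  rw [integral_div, integral_sq_norm_trigPoly]
  exact div_self (korovkinMass_pos n).ne'

lemma korovkinCoeff_one : korovkinCoeff n 1 = cos (π / (n + 2)) := by
  have hzero : korovkinWeight n 0 = 0 := by simp [korovkinWeight]
  have hend : korovkinWeight n (n + 2) = 0 := by
    have h : ((n + 2 : ℤ) : ℝ) * (π / (n + 2)) = π := by push_cast; field_simp
    rw [korovkinWeight, h, sin_pi]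
  have hsum : autocorrelation (Finset.Icc 1 (n + 1)) (korovkinWeight n) 1
      + autocorrelation (Finset.Icc 1 (n + 1)) (korovkinWeight n) (-1)
      = 2 * cos (π / (n + 2)) * korovkinMass n := by
    rw [korovkinMass, autocorrelation_eq_sum (k := 1), autocorrelation_eq_sum (k := -1),
      autocorrelation_eq_sum (k := 0), ← Finset.sum_add_distrib, Finset.mul_sum]
    · refine Finset.sum_congr rfl fun j _ => ?_
      simp only [korovkinWeight, sub_neg_eq_add, sub_zero]
      push_cast
      rw [sub_mul, add_mul, one_mul, sin_add, sin_sub]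
      ring
    · exact fun j hj h => absurd hj (by simpa using h)
    · intro j hj h
      rwa [show j - -1 = n + 2 by simp only [Finset.mem_Icc] at hj h; omega]
    · intro j hj h
      rwa [show j - 1 = 0 by simp only [Finset.mem_Icc] at hj h; omega]
  rw [autocorrelation_neg] at hsum
  rw [korovkinCoeff, div_eq_iff (korovkinMass_pos n).ne']
  linarith

lemma integral_sq_norm_mul_korovkinKernel_le :
    ∫ y, ‖y‖ ^ 2 * korovkinKernel n y ≤ (π / (4 * (n + 2))) ^ 2 := by
  have hcont := continuous_korovkinKernel n
  have hre : ∫ y, (fourier 1 y : ℂ).re * korovkinKernel n y = cos (π / (n + 2)) := by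
    rw [← korovkinCoeff_one, korovkinCoeff, ← integral_re_fourier_mul_sq_norm_trigPoly,
      ← integral_div]
    exact integral_congr_ae (.of_forall fun y => (mul_div_assoc _ _ _).symm)
  have hmoment : 8 * ∫ y, ‖y‖ ^ 2 * korovkinKernel n y ≤ 1 - cos (π / (n + 2)) :=
    calc 8 * ∫ y, ‖y‖ ^ 2 * korovkinKernel n y = ∫ y, 8 * ‖y‖ ^ 2 * korovkinKernel n y := by
          simp only [← integral_const_mul, mul_assoc]
      _ ≤ ∫ y, (1 - (fourier 1 y : ℂ).re) * korovkinKernel n y :=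
          integral_mono (integrable_of_continuous (by fun_prop))
            (integrable_of_continuous (by fun_prop)) fun y => mul_le_mul_of_nonneg_right
              (eight_mul_sq_norm_le_one_sub_re_fourier y) (korovkinKernel_nonneg n y)
      _ = 1 - cos (π / (n + 2)) := by
          simp only [sub_mul, one_mul]
          rw [integral_sub (integrable_of_continuous hcont)
            (integrable_of_continuous (by fun_prop)), integral_korovkinKernel, hre]
  have hscale : (π / (n + 2)) ^ 2 / 2 = 8 * (π / (4 * (n + 2))) ^ 2 := by
    field_simp
    norm_num
  linarith [one_sub_sq_div_two_le_cos (x := π / (n + 2))]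

end KorovkinKernel

section TorusKernel

/-- The tensor power of the Fejér–Korovkin kernel. -/
def torusKernel (n : ℕ) (y : UnitAddTorus ι) : ℝ := ∏ i, korovkinKernel n (y i)

/-- The Fourier coefficients of `torusKernel`. -/
def torusKernelCoeff (n : ℕ) (m : ι → ℤ) : ℝ := ∏ i, korovkinCoeff n (m i)

/-- The frequencies `m` with `|m i| ≤ n` for all `i`. -/
def frequencyBox (ι : Type*) [Fintype ι] [DecidableEq ι] (n : ℕ) : Finset (ι → ℤ) :=
  Fintype.piFinset fun _ => Finset.Icc (-n : ℤ) n

variable (n : ℕ)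

lemma continuous_torusKernel : Continuous (torusKernel n : UnitAddTorus ι → ℝ) :=
  continuous_finsetProd _ fun i _ => (continuous_korovkinKernel n).comp (continuous_apply i)

lemma torusKernel_nonneg (y : UnitAddTorus ι) : 0 ≤ torusKernel n y :=
  Finset.prod_nonneg fun i _ => korovkinKernel_nonneg n (y i)

lemma torusKernel_eq_sum [DecidableEq ι] (y : UnitAddTorus ι) :
    (torusKernel n y : ℂ)
      = ∑ m ∈ frequencyBox ι n, (torusKernelCoeff n m : ℂ) * mFourier m y := by
  simp only [torusKernel, Complex.ofReal_prod, korovkinKernel_eq_sum]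
  rw [Finset.prod_univ_sum]
  refine Finset.sum_congr rfl fun m _ => ?_
  rw [Finset.prod_mul_distrib, torusKernelCoeff, Complex.ofReal_prod]
  rfl

lemma abs_torusKernelCoeff_le_one (m : ι → ℤ) : |torusKernelCoeff n m| ≤ 1 := by
  rw [torusKernelCoeff, Finset.abs_prod]
  exact Finset.prod_le_one (fun _ _ => abs_nonneg _) fun i _ => abs_korovkinCoeff_le_one n (m i)

lemma integral_torusKernel : ∫ y : UnitAddTorus ι, torusKernel n y = 1 := by
  simp only [torusKernel]
  rw [integral_fintype_prod_volume_eq_prod fun _ => korovkinKernel n]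
  simp only [integral_korovkinKernel, Finset.prod_const_one]

lemma integral_sq_norm_apply_mul_torusKernel_le (i : ι) :
    ∫ y : UnitAddTorus ι, ‖y i‖ ^ 2 * torusKernel n y ≤ (π / (4 * (n + 2))) ^ 2 := by
  classical
  let factor (j : ι) (x : UnitAddCircle) : ℝ := (if j = i then ‖x‖ ^ 2 else 1) * korovkinKernel n x
  have hprod (y : UnitAddTorus ι) : ‖y i‖ ^ 2 * torusKernel n y = ∏ j, factor j (y j) := by
    simp only [factor, Finset.prod_mul_distrib, Finset.prod_ite_eq', Finset.mem_univ, if_true]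
    rfl
  have hfactor (j : ι) (hj : j ≠ i) : ∫ x, factor j x = 1 := by
    simp only [factor, if_neg hj, one_mul, integral_korovkinKernel]
  simp only [hprod]
  rw [integral_fintype_prod_volume_eq_prod factor,
    Finset.prod_eq_single i (fun j _ hj => hfactor j hj) (by simp)]
  simpa only [factor, if_true] using integral_sq_norm_mul_korovkinKernel_le n

lemma integral_sq_torusNorm_mul_torusKernel_le :
    ∫ y : UnitAddTorus ι, torusNorm y ^ 2 * torusKernel n y
      ≤ (√(Fintype.card ι) * (π / (4 * (n + 2)))) ^ 2 := by
  have hcont := continuous_torusKernel (ι := ι) n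
  simp only [sq_torusNorm, Finset.sum_mul]
  rw [integral_finsetSum _ fun i _ => integrable_of_continuous (by fun_prop), mul_pow,
    Real.sq_sqrt (Nat.cast_nonneg _)]
  refine (Finset.sum_le_sum fun i _ => integral_sq_norm_apply_mul_torusKernel_le n i).trans_eq ?_
  simp

lemma integral_torusNorm_mul_torusKernel_le :
    ∫ y : UnitAddTorus ι, torusNorm y * torusKernel n y
      ≤ √(Fintype.card ι) * (π / (4 * (n + 2))) := by
  have hK := continuous_torusKernel (ι := ι) n
  have hnorm := continuous_torusNorm (ι := ι)
  refine (integral_mul_le_sqrt_integral_sq_mul (torusKernel_nonneg n) (integral_torusKernel n)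
    (integrable_of_continuous (by fun_prop)) (integrable_of_continuous (by fun_prop))).trans ?_
  exact Real.sqrt_le_iff.2 ⟨by positivity, integral_sq_torusNorm_mul_torusKernel_le n⟩

end TorusKernel

lemma integral_mul_comp_sub_eq_sum {K f : UnitAddTorus ι → ℂ} {F : Finset (ι → ℤ)}
    {c : (ι → ℤ) → ℂ} (hf : Continuous f) (hK : ∀ y, K y = ∑ m ∈ F, c m * mFourier m y)
    (z : UnitAddTorus ι) :
    ∫ y, K y * f (z - y) = ∑ m ∈ F, c m * mFourierCoeff f m * mFourier m z := by
  have : (volume : Measure (UnitAddTorus ι)).IsNegInvariant := Measure.pi.isNegInvariant _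
  have hexpand (y : UnitAddTorus ι) : K (z - y) * f (z - (z - y))
      = ∑ m ∈ F, c m * mFourier m z * (mFourier (-m) y • f y) := by
    rw [hK, Finset.sum_mul, _root_.sub_sub_cancel]
    refine Finset.sum_congr rfl fun m _ => ?_
    rw [sub_eq_add_neg, mFourier_apply_add, mFourier_apply_neg, smul_eq_mul]
    ring
  rw [← integral_sub_left_eq_self (fun y => K y * f (z - y)) volume z]
  simp only [hexpand]
  rw [integral_finsetSum _ fun m _ => integrable_of_continuous (by fun_prop)]
  refine Finset.sum_congr rfl fun m _ => ?_
  rw [integral_const_mul, mFourierCoeff]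
  ring

section Lipschitz

variable {f : UnitAddTorus ι → ℂ} {L : ℝ}

lemma norm_sub_sum_torusKernelCoeff_le [DecidableEq ι] (hf : Continuous f) (hL : 0 ≤ L)
    (hLip : ∀ z w, ‖f (z + w) - f z‖ ≤ L * torusNorm w) (n : ℕ) (z : UnitAddTorus ι) :
    ‖f z - ∑ m ∈ frequencyBox ι n, torusKernelCoeff n m * mFourierCoeff f m * mFourier m z‖
      ≤ L * (√(Fintype.card ι) * (π / (4 * (n + 2)))) := by
  have hK := continuous_torusKernel (ι := ι) n
  have hnorm := continuous_torusNorm (ι := ι)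
  have hmass : ∫ y : UnitAddTorus ι, (torusKernel n y : ℂ) * f z = f z := by
    rw [integral_mul_const, integral_complex_ofReal, integral_torusKernel, Complex.ofReal_one,
      one_mul]
  have hpoint (y : UnitAddTorus ι) : ‖(torusKernel n y : ℂ) * f z - torusKernel n y * f (z - y)‖
      ≤ L * (torusNorm y * torusKernel n y) := by
    rw [← mul_sub, norm_mul, Complex.norm_real, Real.norm_of_nonneg (torusKernel_nonneg n y)]
    have h := hLip (z - y) y
    rw [sub_add_cancel] at h
    exact (mul_le_mul_of_nonneg_left h (torusKernel_nonneg n y)).trans_eq (by ring)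
  calc ‖f z - ∑ m ∈ frequencyBox ι n, torusKernelCoeff n m * mFourierCoeff f m * mFourier m z‖
      = ‖∫ y, ((torusKernel n y : ℂ) * f z - torusKernel n y * f (z - y))‖ := by
        rw [integral_sub (integrable_of_continuous (by fun_prop))
          (integrable_of_continuous (by fun_prop)), hmass,
          integral_mul_comp_sub_eq_sum hf (torusKernel_eq_sum n)]
    _ ≤ ∫ y, L * (torusNorm y * torusKernel n y) :=
        norm_integral_le_of_norm_le (integrable_of_continuous (by fun_prop)) (.of_forall hpoint)
    _ ≤ L * (√(Fintype.card ι) * (π / (4 * (n + 2)))) := by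
        rw [integral_const_mul]
        exact mul_le_mul_of_nonneg_left (integral_torusNorm_mul_torusKernel_le n) hL

lemma sum_norm_mFourierCoeff_mul_le (hf : Continuous f) (hL : 0 ≤ L)
    (hLip : ∀ z w, ‖f (z + w) - f z‖ ≤ L * torusNorm w) {F : Finset (ι → ℤ)} (hF : 0 ∉ F)
    (D : (ι → ℤ) → ℝ) :
    ∑ m ∈ F, ‖mFourierCoeff f m‖ * D m
      ≤ √(Fintype.card ι) * L / (2 * π) * √(∑ m ∈ F, D m ^ 2 / freqNormSq m) := by
  have hpos (m) (hm : m ∈ F) : 0 < freqNormSq m := freqNormSq_pos (ne_of_mem_of_not_mem hm hF)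
  calc ∑ m ∈ F, ‖mFourierCoeff f m‖ * D m
      = ∑ m ∈ F, √(freqNormSq m) * ‖mFourierCoeff f m‖ * (D m / √(freqNormSq m)) :=
        Finset.sum_congr rfl fun m hm => by
          field_simp [(Real.sqrt_pos.2 (hpos m hm)).ne']
    _ ≤ √(∑ m ∈ F, (√(freqNormSq m) * ‖mFourierCoeff f m‖) ^ 2)
          * √(∑ m ∈ F, (D m / √(freqNormSq m)) ^ 2) := Real.sum_mul_le_sqrt_mul_sqrt _ _ _
    _ = √(∑ m ∈ F, freqNormSq m * ‖mFourierCoeff f m‖ ^ 2)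
          * √(∑ m ∈ F, D m ^ 2 / freqNormSq m) := by
        congr 2 <;> refine Finset.sum_congr rfl fun m hm => ?_
        · rw [mul_pow, Real.sq_sqrt (hpos m hm).le]
        · rw [div_pow, Real.sq_sqrt (hpos m hm).le]
    _ ≤ √(Fintype.card ι) * L / (2 * π) * √(∑ m ∈ F, D m ^ 2 / freqNormSq m) := by
        gcongr
        exact Real.sqrt_le_iff.2
          ⟨by positivity, sum_freqNormSq_mul_sq_norm_mFourierCoeff_le hf hL hLip F⟩

variable {ρ σ : Measure (UnitAddTorus ι)} [IsProbabilityMeasure ρ] [IsProbabilityMeasure σ]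

lemma norm_integral_sum_mFourier_sub_le (hf : Continuous f) (hL : 0 ≤ L)
    (hLip : ∀ z w, ‖f (z + w) - f z‖ ≤ L * torusNorm w) (F : Finset (ι → ℤ))
    {c : (ι → ℤ) → ℂ} (hc : ∀ m, ‖c m‖ ≤ 1) :
    ‖∫ z, ∑ m ∈ F, c m * mFourierCoeff f m * mFourier m z ∂ρ
        - ∫ z, ∑ m ∈ F, c m * mFourierCoeff f m * mFourier m z ∂σ‖
      ≤ √(Fintype.card ι) * L / (2 * π) * √(∑ m ∈ F.erase 0,
          ‖∫ z, mFourier m z ∂ρ - ∫ z, mFourier m z ∂σ‖ ^ 2 / freqNormSq m) := by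
  let D (m : ι → ℤ) : ℂ := ∫ z, mFourier m z ∂ρ - ∫ z, mFourier m z ∂σ
  have hD0 : D 0 = 0 := by simp [D, mFourier_zero]
  have hintegral (τ : Measure (UnitAddTorus ι)) [IsProbabilityMeasure τ] :
      ∫ z, ∑ m ∈ F, c m * mFourierCoeff f m * mFourier m z ∂τ
        = ∑ m ∈ F, c m * mFourierCoeff f m * ∫ z, mFourier m z ∂τ := by
    rw [integral_finsetSum _ fun m _ => integrable_of_continuous (by fun_prop)]
    simp only [integral_const_mul]
  calc ‖∫ z, ∑ m ∈ F, c m * mFourierCoeff f m * mFourier m z ∂ρ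
        - ∫ z, ∑ m ∈ F, c m * mFourierCoeff f m * mFourier m z ∂σ‖
      = ‖∑ m ∈ F, c m * mFourierCoeff f m * D m‖ := by
        simp only [hintegral, ← Finset.sum_sub_distrib, ← mul_sub, D]
    _ ≤ ∑ m ∈ F, ‖mFourierCoeff f m‖ * ‖D m‖ := norm_sum_le_of_le _ fun m _ => by
        rw [norm_mul, norm_mul]
        gcongr
        exact mul_le_of_le_one_left (norm_nonneg _) (hc m)
    _ = ∑ m ∈ F.erase 0, ‖mFourierCoeff f m‖ * ‖D m‖ :=
        (Finset.sum_erase _ (by rw [hD0, norm_zero, mul_zero])).symm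
    _ ≤ _ := sum_norm_mFourierCoeff_mul_le hf hL hLip (Finset.notMem_erase 0 F) _

theorem norm_integral_sub_integral_le_of_lipschitz [DecidableEq ι] (hf : Continuous f) (hL : 0 ≤ L)
    (hLip : ∀ z w, ‖f (z + w) - f z‖ ≤ L * torusNorm w) (n : ℕ) :
    ‖∫ z, f z ∂ρ - ∫ z, f z ∂σ‖
      ≤ √(Fintype.card ι) * L * π / (2 * (n + 2)) + √(Fintype.card ι) * L / (2 * π)
        * √(∑ m ∈ (frequencyBox ι n).erase 0,
          ‖∫ z, mFourier m z ∂ρ - ∫ z, mFourier m z ∂σ‖ ^ 2 / freqNormSq m) := by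
  let S (z : UnitAddTorus ι) : ℂ :=
    ∑ m ∈ frequencyBox ι n, torusKernelCoeff n m * mFourierCoeff f m * mFourier m z
  have hS : Continuous S := by fun_prop
  have hlow := norm_integral_sum_mFourier_sub_le (ρ := ρ) (σ := σ) hf hL hLip (frequencyBox ι n)
    (c := fun m => torusKernelCoeff n m) fun m => by
      simpa using abs_torusKernelCoeff_le_one n m
  have hsmooth (τ : Measure (UnitAddTorus ι)) [IsProbabilityMeasure τ] :
      ‖∫ z, f z ∂τ - ∫ z, S z ∂τ‖ ≤ L * (√(Fintype.card ι) * (π / (4 * (n + 2)))) := by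
    rw [← integral_sub (integrable_of_continuous hf) (integrable_of_continuous hS)]
    simpa using norm_integral_le_of_norm_le_const (μ := τ)
      (.of_forall (norm_sub_sum_torusKernelCoeff_le hf hL hLip n))
  have hsplit : ∫ z, f z ∂ρ - ∫ z, f z ∂σ
      = (∫ z, f z ∂ρ - ∫ z, S z ∂ρ) - (∫ z, f z ∂σ - ∫ z, S z ∂σ)
        + (∫ z, S z ∂ρ - ∫ z, S z ∂σ) := by ring
  rw [hsplit]
  refine (norm_add_le_of_le ((norm_sub_le _ _).trans (add_le_add (hsmooth ρ) (hsmooth σ)))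
    hlow).trans_eq ?_
  congr 1
  field_simp
  ring

end Lipschitz

end Torus

section Reflection

variable {d : ℕ}

/-- The map of `ℝ^d` to the torus that sends the cube `[0,1]^d` to the orthant `[0,1/2]^d`. -/
def halve (x : Fin d → ℝ) : UnitAddTorus (Fin d) := fun i => (x i / 2 : ℝ)

/-- The folding of the torus onto the cube `[0,1]^d`: it identifies points that differ by a
reflection in a coordinate hyperplane, and it is a left inverse of `halve` on the cube. -/
def fold (z : UnitAddTorus (Fin d)) : Fin d → ℝ := fun i => 2 * ‖z i‖

lemma continuous_halve : Continuous (halve (d := d)) :=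
  continuous_pi fun _ => (AddCircle.continuous_mk' 1).comp (by fun_prop)

lemma continuous_fold : Continuous (fold (d := d)) := by
  unfold fold
  fun_prop

lemma fold_halve {x : Fin d → ℝ} (hx : ∀ i, x i ∈ Set.Icc (0 : ℝ) 1) : fold (halve x) = x := by
  funext i
  have hhalf : |x i / 2| = x i / 2 := abs_of_nonneg (by linarith [(hx i).1])
  have hnorm : ‖((x i / 2 : ℝ) : UnitAddCircle)‖ = |x i / 2| := by
    rw [AddCircle.norm_coe_eq_abs_iff (p := 1) one_ne_zero, hhalf, abs_one]
    linarith [(hx i).2]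
  rw [fold, halve, hnorm, hhalf]
  ring

lemma map_fold_map_halve {μ : Measure (Fin d → ℝ)} (hμ : ∀ᵐ x ∂μ, ∀ i, x i ∈ Set.Icc (0 : ℝ) 1) :
    (μ.map halve).map fold = μ := by
  rw [Measure.map_map continuous_fold.measurable continuous_halve.measurable,
    Measure.map_congr (f := fold ∘ halve) (g := id) (hμ.mono fun _ => fold_halve), Measure.map_id]

lemma mFourier_halve (m : Fin d → ℤ) (x : Fin d → ℝ) :
    UnitAddTorus.mFourier m (halve x)
      = Complex.exp (Complex.I * ∑ i, ((π * m i : ℝ) : ℂ) * (x i : ℂ)) := by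
  simp only [UnitAddTorus.mFourier, ContinuousMap.coe_mk, halve, fourier_coe_apply]
  rw [Finset.mul_sum, Complex.exp_sum]
  refine Finset.prod_congr rfl fun i _ => ?_
  congr 1
  push_cast
  ring

lemma integral_mFourier_map_halve (μ : Measure (Fin d → ℝ)) (m : Fin d → ℤ) :
    ∫ z, UnitAddTorus.mFourier m z ∂μ.map halve = charFun μ fun i => π * m i := by
  rw [integral_map continuous_halve.aemeasurable
    (UnitAddTorus.mFourier m).continuous.aestronglyMeasurable]
  simp only [mFourier_halve, _root_.charFun]

lemma euclidDist_eq_dist (x y : Fin d → ℝ) :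
    euclidDist x y = dist (WithLp.toLp 2 x) (WithLp.toLp 2 y) := by
  simp only [euclidDist, EuclideanSpace.dist_eq, Real.dist_eq, sq_abs]

lemma continuous_euclidDist :
    Continuous fun p : (Fin d → ℝ) × (Fin d → ℝ) => euclidDist p.1 p.2 := by
  unfold euclidDist
  fun_prop

lemma euclidDist_fold_add_le (z w : UnitAddTorus (Fin d)) :
    euclidDist (fold (z + w)) (fold z) ≤ 2 * torusNorm w := by
  have hcoord (i : Fin d) : (fold (z + w) i - fold z i) ^ 2 ≤ 2 ^ 2 * ‖w i‖ ^ 2 := by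
    rw [fold, fold, ← mul_sub, mul_pow]
    have hnorm : |‖z i + w i‖ - ‖z i‖| ≤ ‖w i‖ := by
      simpa using abs_norm_sub_norm_le (z i + w i) (z i)
    exact mul_le_mul_of_nonneg_left (sq_le_sq.2 (hnorm.trans_eq (abs_norm _).symm)) (sq_nonneg 2)
  refine Real.sqrt_le_iff.2 ⟨mul_nonneg zero_le_two (torusNorm_nonneg w), ?_⟩
  rw [mul_pow, sq_torusNorm, Finset.mul_sum]
  exact Finset.sum_le_sum fun i _ => hcoord i

lemma norm_ofReal_add_sub_le_of_forall_sub_le {h : UnitAddTorus (Fin d) → ℝ}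
    (hh : ∀ z w, h z - h w ≤ euclidDist (fold z) (fold w)) (z w : UnitAddTorus (Fin d)) :
    ‖(h (z + w) : ℂ) - h z‖ ≤ 2 * torusNorm w := by
  refine le_trans ?_ (euclidDist_fold_add_le z w)
  rw [← Complex.ofReal_sub, Complex.norm_real, Real.norm_eq_abs, abs_sub_le_iff]
  refine ⟨hh _ _, (hh _ _).trans_eq ?_⟩
  rw [euclidDist_eq_dist, euclidDist_eq_dist, dist_comm]

lemma transportCost_euclidDist_fold_le (ρ σ : Measure (UnitAddTorus (Fin d)))
    [IsProbabilityMeasure ρ] [IsProbabilityMeasure σ] (n : ℕ) :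
    transportCost (fun z w => euclidDist (fold z) (fold w)) ρ σ
      ≤ ENNReal.ofReal (√d * π / (n + 2) + √d / π * √(∑ m ∈ (frequencyBox (Fin d) n).erase 0,
          ‖∫ z, UnitAddTorus.mFourier m z ∂ρ - ∫ z, UnitAddTorus.mFourier m z ∂σ‖ ^ 2
            / freqNormSq m)) := by
  have hcont : Continuous fun p : UnitAddTorus (Fin d) × UnitAddTorus (Fin d) =>
      euclidDist (fold p.1) (fold p.2) :=
    continuous_euclidDist.comp (continuous_fold.prodMap continuous_fold)
  refine transportCost_le_of_forall_integral_sub_le hcont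
    (fun z => by simp only [euclidDist_eq_dist, dist_self])
    (fun z w => by simp only [euclidDist_eq_dist, dist_comm])
    (fun z w v => by simpa only [euclidDist_eq_dist] using dist_triangle _ _ _) fun h hh => ?_
  have hfourier := norm_integral_sub_integral_le_of_lipschitz (ρ := ρ) (σ := σ)
    (Complex.continuous_ofReal.comp h.continuous) zero_le_two
    (norm_ofReal_add_sub_le_of_forall_sub_le hh) n
  simp only [Function.comp_apply, integral_complex_ofReal, ← Complex.ofReal_sub,
    Complex.norm_real, Fintype.card_fin] at hfourier
  refine (le_abs_self _).trans (hfourier.trans_eq ?_)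
  congr 1 <;> field_simp

theorem W1_le_of_ae_mem_cube {μ ν : Measure (Fin d → ℝ)} [IsProbabilityMeasure μ]
    [IsProbabilityMeasure ν] (hμ : ∀ᵐ x ∂μ, ∀ i, x i ∈ Set.Icc (0 : ℝ) 1)
    (hν : ∀ᵐ x ∂ν, ∀ i, x i ∈ Set.Icc (0 : ℝ) 1) (n : ℕ) :
    W1 μ ν ≤ ENNReal.ofReal (√d * π / (n + 2)
      + √d / π * √(∑ m ∈ (frequencyBox (Fin d) n).erase 0,
          ‖charFun μ (fun i => π * m i) - charFun ν (fun i => π * m i)‖ ^ 2 / freqNormSq m)) := by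
  have : IsProbabilityMeasure (μ.map halve) :=
    Measure.isProbabilityMeasure_map continuous_halve.aemeasurable
  have : IsProbabilityMeasure (ν.map halve) :=
    Measure.isProbabilityMeasure_map continuous_halve.aemeasurable
  have hpush : W1 μ ν ≤ transportCost (fun z w => euclidDist (fold z) (fold w)) (μ.map halve)
      (ν.map halve) := by
    simpa only [W1, map_fold_map_halve hμ, map_fold_map_halve hν] using
      transportCost_map_le continuous_fold.measurable continuous_euclidDist.measurable
        (μ.map halve) (ν.map halve)
  simpa only [integral_mFourier_map_halve] using
    hpush.trans (transportCost_euclidDist_fold_le (μ.map halve) (ν.map halve) n)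

end Reflection

section Expectation

variable {d : ℕ}

/-- The sum of `1 / |m|²` over the nonzero integer points of the cube `[-n,n]^d`. -/
def latticeSum (d n : ℕ) : ℝ := ∑ m ∈ (frequencyBox (Fin d) n).erase 0, 1 / freqNormSq m

/-- The bound on `E (W₁ (μ, ν))` obtained from the frequencies in `[-n,n]^d`: the first term is the
error of smoothing at scale `1 / n`, the second one bounds the contribution of these frequencies. -/
def truncationBound (d n : ℕ) (δ : ℝ) : ℝ := √d * π / (n + 2) + √d / π * (δ * √(latticeSum d n))

lemma norm_charFun_le_one (μ : Measure (Fin d → ℝ)) [IsProbabilityMeasure μ] (ξ : Fin d → ℝ) :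
    ‖charFun μ ξ‖ ≤ 1 := by
  have hexp (x : Fin d → ℝ) : ‖Complex.exp (Complex.I * ∑ i, (ξ i : ℂ) * (x i : ℂ))‖ ≤ 1 := by
    rw [Complex.norm_exp]
    simp [← Complex.ofReal_mul, ← Complex.ofReal_sum]
  simpa [_root_.charFun] using norm_integral_le_of_norm_le_const (μ := μ) (.of_forall hexp)

variable {Ω : Type*} [MeasurableSpace Ω]

lemma stronglyMeasurable_charFun {μ : Ω → Measure (Fin d → ℝ)} (hμ : Measurable μ)
    (ξ : Fin d → ℝ) : StronglyMeasurable fun ω => charFun (μ ω) ξ :=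
  StronglyMeasurable.integral_kernel (κ := (⟨μ, hμ⟩ : ProbabilityTheory.Kernel Ω (Fin d → ℝ)))
    (Continuous.stronglyMeasurable (by fun_prop))

variable {P : Measure Ω} [IsProbabilityMeasure P]

lemma integrable_sq_norm_charFun_sub {μ ν : Ω → Measure (Fin d → ℝ)}
    (hμmeas : Measurable μ) (hνmeas : Measurable ν)
    (hμprob : ∀ ω, IsProbabilityMeasure (μ ω)) (hνprob : ∀ ω, IsProbabilityMeasure (ν ω))
    (ξ : Fin d → ℝ) : Integrable (fun ω => ‖charFun (μ ω) ξ - charFun (ν ω) ξ‖ ^ 2) P := by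
  refine Integrable.of_bound (C := (1 + 1) ^ 2) (((stronglyMeasurable_charFun hμmeas ξ).sub
    (stronglyMeasurable_charFun hνmeas ξ)).norm.pow 2).aestronglyMeasurable (.of_forall fun ω => ?_)
  rw [norm_pow, norm_norm]
  gcongr
  have := hμprob ω
  have := hνprob ω
  exact norm_sub_le_of_le (norm_charFun_le_one _ ξ) (norm_charFun_le_one _ ξ)

lemma lintegral_ofReal_add_mul_sqrt_le {X : Ω → ℝ} (hX : Integrable X P) (hX0 : ∀ ω, 0 ≤ X ω)
    {A B : ℝ} (hA : 0 ≤ A) (hB : 0 ≤ B) :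
    ∫⁻ ω, ENNReal.ofReal (A + B * √(X ω)) ∂P ≤ ENNReal.ofReal (A + B * √(∫ ω, X ω ∂P)) := by
  have hsqrt : Integrable (fun ω => √(X ω)) P := by
    refine (hX.add (integrable_const 1)).mono'
      (Real.continuous_sqrt.comp_aestronglyMeasurable hX.aestronglyMeasurable)
      (.of_forall fun ω => ?_)
    rw [Real.norm_of_nonneg (Real.sqrt_nonneg _), Real.sqrt_le_iff, Pi.add_apply]
    constructor <;> nlinarith [hX0 ω]
  have hjensen : ∫ ω, √(X ω) ∂P ≤ √(∫ ω, X ω ∂P) :=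
    Real.strictConcaveOn_sqrt.concaveOn.le_map_integral Real.continuous_sqrt.continuousOn
      isClosed_Ici (.of_forall hX0) hX hsqrt
  have hsum : Integrable (fun ω => A + B * √(X ω)) P :=
    (integrable_const A).add (hsqrt.const_mul B)
  rw [← ofReal_integral_eq_lintegral_ofReal hsum (.of_forall fun ω => by positivity),
    integral_add (integrable_const A) (hsqrt.const_mul B), integral_const_mul]
  simp only [integral_const, probReal_univ, one_smul]
  gcongr

theorem lintegral_W1_le_truncationBound {μ ν : Ω → Measure (Fin d → ℝ)}
    (hμmeas : Measurable μ) (hνmeas : Measurable ν)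
    (hμprob : ∀ ω, IsProbabilityMeasure (μ ω)) (hνprob : ∀ ω, IsProbabilityMeasure (ν ω))
    (hμsupp : ∀ ω, ∀ᵐ x ∂μ ω, ∀ i, x i ∈ Set.Icc (0 : ℝ) 1)
    (hνsupp : ∀ ω, ∀ᵐ x ∂ν ω, ∀ i, x i ∈ Set.Icc (0 : ℝ) 1) {δ : ℝ} (hδ : 0 ≤ δ)
    (hclose : ∀ m : Fin d → ℤ,
      ∫ ω, ‖charFun (μ ω) (fun i => π * m i) - charFun (ν ω) (fun i => π * m i)‖ ^ 2 ∂P ≤ δ ^ 2)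
    (n : ℕ) : ∫⁻ ω, W1 (μ ω) (ν ω) ∂P ≤ ENNReal.ofReal (truncationBound d n δ) := by
  let D (m : Fin d → ℤ) (ω : Ω) : ℝ :=
    ‖charFun (μ ω) (fun i => π * m i) - charFun (ν ω) (fun i => π * m i)‖ ^ 2 / freqNormSq m
  let X (ω : Ω) : ℝ := ∑ m ∈ (frequencyBox (Fin d) n).erase 0, D m ω
  have hD (m) : Integrable (D m) P :=
    (integrable_sq_norm_charFun_sub hμmeas hνmeas hμprob hνprob _).div_const _
  have hX0 (ω) : 0 ≤ X ω :=
    Finset.sum_nonneg fun m _ => div_nonneg (sq_nonneg _) (freqNormSq_nonneg m)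
  have hX : ∫ ω, X ω ∂P ≤ δ ^ 2 * latticeSum d n := by
    rw [integral_finsetSum _ fun m _ => hD m, latticeSum, Finset.mul_sum]
    refine Finset.sum_le_sum fun m _ => ?_
    rw [integral_div, mul_one_div]
    exact div_le_div_of_nonneg_right (hclose m) (freqNormSq_nonneg m)
  calc ∫⁻ ω, W1 (μ ω) (ν ω) ∂P
      ≤ ∫⁻ ω, ENNReal.ofReal (√d * π / (n + 2) + √d / π * √(X ω)) ∂P :=
        lintegral_mono fun ω => by
          have := hμprob ω
          have := hνprob ω
          exact W1_le_of_ae_mem_cube (hμsupp ω) (hνsupp ω) n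
    _ ≤ ENNReal.ofReal (√d * π / (n + 2) + √d / π * √(∫ ω, X ω ∂P)) :=
        lintegral_ofReal_add_mul_sqrt_le (integrable_finsetSum _ fun m _ => hD m) hX0
          (by positivity) (by positivity)
    _ ≤ ENNReal.ofReal (truncationBound d n δ) := by
        have hsqrt : √(∫ ω, X ω ∂P) ≤ δ * √(latticeSum d n) := by
          rw [← Real.sqrt_sq hδ, ← Real.sqrt_mul (sq_nonneg _)]
          exact Real.sqrt_le_sqrt hX
        rw [truncationBound]
        gcongr

end Expectation

section LatticeSum

variable {ι : Type*} [Fintype ι]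

/-- The supremum norm of an integer vector, as a natural number. -/
def supNorm (m : ι → ℤ) : ℕ := Finset.univ.sup fun i => (m i).natAbs

/-- The integer points of the two faces of the cube `[-k,k]^ι` orthogonal to the `i`-th axis. -/
def cubeFaces [DecidableEq ι] (i : ι) (k : ℕ) : Finset (ι → ℤ) :=
  Fintype.piFinset fun j => if j = i then {(k : ℤ), -(k : ℤ)} else Finset.Icc (-k : ℤ) k

lemma natAbs_le_supNorm (m : ι → ℤ) (i : ι) : (m i).natAbs ≤ supNorm m :=
  Finset.le_sup (f := fun i => (m i).natAbs) (Finset.mem_univ i)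

lemma exists_natAbs_eq_supNorm {m : ι → ℤ} (hm : m ≠ 0) : ∃ i, (m i).natAbs = supNorm m := by
  obtain ⟨i, -⟩ := Function.ne_iff.1 hm
  obtain ⟨j, -, hj⟩ := Finset.exists_mem_eq_sup Finset.univ ⟨i, Finset.mem_univ i⟩
    fun i => (m i).natAbs
  exact ⟨j, hj.symm⟩

lemma supNorm_pos {m : ι → ℤ} (hm : m ≠ 0) : 0 < supNorm m := by
  obtain ⟨i, hi⟩ := Function.ne_iff.1 hm
  exact (Int.natAbs_pos.2 hi).trans_le (natAbs_le_supNorm m i)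

lemma supNorm_le_of_mem_frequencyBox [DecidableEq ι] {m : ι → ℤ} {n : ℕ}
    (hm : m ∈ frequencyBox ι n) : supNorm m ≤ n :=
  Finset.sup_le fun i _ => by
    have := Finset.mem_Icc.1 (Fintype.mem_piFinset.1 hm i)
    omega

lemma sq_supNorm_le_freqNormSq {m : ι → ℤ} (hm : m ≠ 0) : (supNorm m : ℝ) ^ 2 ≤ freqNormSq m := by
  obtain ⟨i, hi⟩ := exists_natAbs_eq_supNorm hm
  rw [← hi, Nat.cast_natAbs, Int.cast_abs, sq_abs]
  exact Finset.single_le_sum (f := fun i => (m i : ℝ) ^ 2) (fun _ _ => sq_nonneg _)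
    (Finset.mem_univ i)

lemma mem_cubeFaces_supNorm [DecidableEq ι] {m : ι → ℤ} {i : ι} (hi : (m i).natAbs = supNorm m) :
    m ∈ cubeFaces i (supNorm m) := by
  refine Fintype.mem_piFinset.2 fun j => ?_
  have hj := natAbs_le_supNorm m j
  split_ifs with hji
  · subst hji
    simp only [Finset.mem_insert, Finset.mem_singleton]
    omega
  · rw [Finset.mem_Icc]
    omega

lemma card_cubeFaces_le [DecidableEq ι] (i : ι) (k : ℕ) :
    (cubeFaces i k).card ≤ 2 * (2 * k + 1) ^ (Fintype.card ι - 1) := by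
  rw [cubeFaces, Fintype.card_piFinset, ← Finset.mul_prod_erase Finset.univ _ (Finset.mem_univ i),
    if_pos rfl, ← Finset.card_univ, ← Finset.card_erase_of_mem (Finset.mem_univ i)]
  refine Nat.mul_le_mul Finset.card_le_two (Finset.prod_le_pow_card _ _ _ fun j hj => ?_)
  rw [if_neg (Finset.ne_of_mem_erase hj), Int.card_Icc]
  omega

lemma card_filter_supNorm_eq_le (F : Finset (ι → ℤ)) (hF : 0 ∉ F) (k : ℕ) :
    ({m ∈ F | supNorm m = k}).card ≤ Fintype.card ι * (2 * (2 * k + 1) ^ (Fintype.card ι - 1)) := by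
  classical
  have hcover : {m ∈ F | supNorm m = k} ⊆ Finset.univ.biUnion fun i => cubeFaces i k := by
    intro m hm
    obtain ⟨hmF, rfl⟩ := Finset.mem_filter.1 hm
    obtain ⟨i, hi⟩ := exists_natAbs_eq_supNorm (ne_of_mem_of_not_mem hmF hF)
    exact Finset.mem_biUnion.2 ⟨i, Finset.mem_univ i, mem_cubeFaces_supNorm hi⟩
  exact (Finset.card_le_card hcover).trans
    (Finset.card_biUnion_le_card_mul _ _ _ fun i _ => card_cubeFaces_le i k)

lemma latticeSum_le_sum_shells (d n : ℕ) :
    latticeSum d n ≤ ∑ k ∈ Finset.Icc 1 n, d * (2 * (2 * k + 1) ^ (d - 1)) / (k : ℝ) ^ 2 := by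
  have hshell (m) (hm : m ∈ (frequencyBox (Fin d) n).erase 0) : supNorm m ∈ Finset.Icc 1 n :=
    Finset.mem_Icc.2 ⟨supNorm_pos (Finset.ne_of_mem_erase hm),
      supNorm_le_of_mem_frequencyBox (Finset.mem_of_mem_erase hm)⟩
  rw [latticeSum, ← Finset.sum_fiberwise_of_maps_to hshell]
  refine Finset.sum_le_sum fun k hk => ?_
  have hk0 : (0 : ℝ) < k := Nat.cast_pos.2 (Finset.mem_Icc.1 hk).1
  have hcard := card_filter_supNorm_eq_le _ (Finset.notMem_erase 0 (frequencyBox (Fin d) n)) k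
  rw [Fintype.card_fin] at hcard
  calc ∑ m ∈ (frequencyBox (Fin d) n).erase 0 with supNorm m = k, 1 / freqNormSq m
      ≤ ∑ m ∈ (frequencyBox (Fin d) n).erase 0 with supNorm m = k, 1 / (k : ℝ) ^ 2 := by
        refine Finset.sum_le_sum fun m hm => ?_
        obtain ⟨hmF, rfl⟩ := Finset.mem_filter.1 hm
        exact one_div_le_one_div_of_le (by positivity)
          (sq_supNorm_le_freqNormSq (Finset.ne_of_mem_erase hmF))
    _ ≤ d * (2 * (2 * k + 1) ^ (d - 1)) / (k : ℝ) ^ 2 := by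
        rw [Finset.sum_const, nsmul_eq_mul, mul_one_div]
        gcongr
        exact_mod_cast hcard

lemma latticeSum_one_le (n : ℕ) : latticeSum 1 n ≤ 4 := by
  have hsum : ∑ k ∈ Finset.Icc 1 n, ((k : ℝ) ^ 2)⁻¹ ≤ 2 := by
    simpa [← Finset.Icc_add_one_sub_one_eq_Ioo] using sum_Ioo_inv_sq_le (α := ℝ) 0 (n + 1)
  refine (latticeSum_le_sum_shells 1 n).trans ?_
  simp only [Nat.cast_one, one_mul, Nat.sub_self, pow_zero, mul_one, div_eq_mul_inv,
    ← Finset.mul_sum]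
  linarith

lemma latticeSum_two_le (n : ℕ) : latticeSum 2 n ≤ 12 * (1 + Real.log n) := by
  have hterm (k) (hk : k ∈ Finset.Icc 1 n) :
      ((2 : ℕ) : ℝ) * (2 * (2 * k + 1) ^ (2 - 1)) / (k : ℝ) ^ 2 ≤ 12 * (k : ℝ)⁻¹ := by
    have hk1 : (1 : ℝ) ≤ k := Nat.one_le_cast.2 (Finset.mem_Icc.1 hk).1
    rw [div_le_iff₀ (by positivity), show 12 * (k : ℝ)⁻¹ * k ^ 2 = 12 * k by field_simp]
    norm_num
    linarith
  have hharmonic := harmonic_le_one_add_log n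
  rw [harmonic_eq_sum_Icc] at hharmonic
  push_cast at hharmonic
  calc latticeSum 2 n ≤ ∑ k ∈ Finset.Icc 1 n, 12 * (k : ℝ)⁻¹ :=
        (latticeSum_le_sum_shells 2 n).trans (Finset.sum_le_sum hterm)
    _ = 12 * ∑ k ∈ Finset.Icc 1 n, (k : ℝ)⁻¹ := (Finset.mul_sum _ _ _).symm
    _ ≤ 12 * (1 + Real.log n) := by gcongr

lemma latticeSum_add_three_le (e n : ℕ) :
    latticeSum (e + 3) n ≤ 18 * (e + 3) * n * (2 * n + 1) ^ e := by
  have hterm (k) (hk : k ∈ Finset.Icc 1 n) :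
      ((e + 3 : ℕ) : ℝ) * (2 * (2 * k + 1) ^ (e + 3 - 1)) / (k : ℝ) ^ 2
        ≤ 18 * (e + 3) * (2 * n + 1) ^ e := by
    have hk1 : (1 : ℝ) ≤ k := Nat.one_le_cast.2 (Finset.mem_Icc.1 hk).1
    have hkn : (k : ℝ) ≤ n := Nat.cast_le.2 (Finset.mem_Icc.1 hk).2
    rw [div_le_iff₀ (by positivity), Nat.add_sub_assoc (by norm_num), pow_add]
    push_cast
    calc ((e : ℝ) + 3) * (2 * ((2 * (k : ℝ) + 1) ^ e * (2 * (k : ℝ) + 1) ^ 2))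
        ≤ ((e : ℝ) + 3) * (2 * ((2 * (n : ℝ) + 1) ^ e * (3 * (k : ℝ)) ^ 2)) := by
          gcongr
          linarith
      _ = 18 * ((e : ℝ) + 3) * (2 * (n : ℝ) + 1) ^ e * (k : ℝ) ^ 2 := by ring
  refine ((latticeSum_le_sum_shells (e + 3) n).trans (Finset.sum_le_sum hterm)).trans_eq ?_
  rw [Finset.sum_const, Nat.card_Icc, Nat.add_sub_cancel, nsmul_eq_mul]
  ring

end LatticeSum

section Optimization

variable {δ : ℝ}

lemma truncationBound_le {d n : ℕ} {S : ℝ} (hδ : 0 ≤ δ) (hS : latticeSum d n ≤ S) :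
    truncationBound d n δ ≤ √d * π / (n + 2) + √d / π * (δ * √S) := by
  rw [truncationBound]
  gcongr

lemma exists_truncationBound_one_le (hδ : 0 < δ) : ∃ n, truncationBound 1 n δ ≤ δ := by
  refine ⟨⌈10 / δ⌉₊, (truncationBound_le hδ.le (latticeSum_one_le _)).trans ?_⟩
  have hπ_gt := Real.pi_gt_d4
  have hπ_lt := Real.pi_lt_d4
  have hsqrt : √(4 : ℝ) = 2 := by
    rw [show (4 : ℝ) = 2 ^ 2 by norm_num, Real.sqrt_sq zero_le_two]
  have hsmooth : π / (⌈10 / δ⌉₊ + 2) ≤ 0.32 * δ :=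
    calc π / (⌈10 / δ⌉₊ + 2) ≤ π / (10 / δ) := by
          gcongr
          linarith [Nat.le_ceil (10 / δ)]
      _ = π / 10 * δ := by field_simp
      _ ≤ 0.32 * δ := by gcongr; linarith
  have hlow : 1 / π * (δ * 2) ≤ 0.65 * δ := by
    rw [one_div_mul_eq_div, div_le_iff₀ pi_pos]
    nlinarith
  rw [hsqrt, Nat.cast_one, Real.sqrt_one, one_mul]
  linarith

lemma latticeSum_two_floor_le (hδ : 0 < δ) (hδ2 : δ ≤ 2) :
    latticeSum 2 ⌊2 / δ⌋₊ ≤ 12 * (1 + Real.log (4 / δ ^ 2)) := by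
  have hone : 1 ≤ 2 / δ := (one_le_div hδ).2 hδ2
  have hlog : Real.log (4 / δ ^ 2) = 2 * Real.log (2 / δ) := by
    rw [show 4 / δ ^ 2 = (2 / δ) ^ 2 by rw [div_pow]; norm_num, Real.log_pow, Nat.cast_ofNat]
  have hfloor : Real.log ⌊2 / δ⌋₊ ≤ Real.log (2 / δ) :=
    Real.log_le_log (Nat.cast_pos.2 (Nat.floor_pos.2 hone)) (Nat.floor_le (by positivity))
  linarith [latticeSum_two_le ⌊2 / δ⌋₊, Real.log_nonneg hone]

lemma exists_truncationBound_two_le (hδ : 0 < δ) (hδ2 : δ ≤ 2) :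
    ∃ n, truncationBound 2 n δ ≤ 5 * δ * √(1 + Real.log (4 / δ ^ 2)) := by
  refine ⟨⌊2 / δ⌋₊, (truncationBound_le hδ.le (latticeSum_two_floor_le hδ hδ2)).trans ?_⟩
  set L := 1 + Real.log (4 / δ ^ 2)
  have hπ_gt := Real.pi_gt_d4
  have hπ_lt := Real.pi_lt_d4
  have hL : 1 ≤ √L := by
    refine Real.one_le_sqrt.2 (le_add_of_nonneg_right (Real.log_nonneg ?_))
    rw [one_le_div (by positivity)]
    nlinarith
  have hsqrt_two : √((2 : ℕ) : ℝ) ≤ 1.42 := Real.sqrt_le_iff.2 (by norm_num)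
  have hsqrt_twelve : √(12 * L) ≤ 3.5 * √L := by
    rw [Real.sqrt_mul (by norm_num)]
    gcongr
    exact Real.sqrt_le_iff.2 (by norm_num)
  have hsmooth : √((2 : ℕ) : ℝ) * π / (⌊2 / δ⌋₊ + 2) ≤ 2.3 * δ * √L :=
    calc √((2 : ℕ) : ℝ) * π / (⌊2 / δ⌋₊ + 2) ≤ 1.42 * 3.1416 / (2 / δ) := by
          gcongr
          linarith [Nat.lt_floor_add_one (2 / δ)]
      _ = 1.42 * 3.1416 / 2 * δ := by field_simp
      _ ≤ 2.3 * δ := by gcongr; norm_num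
      _ ≤ 2.3 * δ * √L := le_mul_of_one_le_right (by positivity) hL
  have hlow : √((2 : ℕ) : ℝ) / π * (δ * √(12 * L)) ≤ 1.42 / 3 * (δ * (3.5 * √L)) := by
    gcongr
    linarith
  have hnonneg : 0 ≤ δ * √L := by positivity
  linarith

lemma add_three_mul_pow_le (e : ℕ) : (e + 3) * (0.8 : ℝ) ^ (e + 1) ≤ 2.56 := by
  have hsucc (e : ℕ) : ((e + 1 : ℕ) + 3) * (0.8 : ℝ) ^ (e + 1 + 1) ≤ 2.56 := by
    induction e with
    | zero => norm_num
    | succ e ih =>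
      have hpow : 0 ≤ (e : ℝ) * 0.8 ^ (e + 1 + 1) := by positivity
      rw [pow_succ]
      push_cast at ih ⊢
      linarith
  cases e with
  | zero => norm_num
  | succ e => exact hsucc e

lemma latticeSum_add_three_ceil_le (e : ℕ) {r : ℝ} (hr : 0 < r) :
    latticeSum (e + 3) (⌈0.4 / r⌉₊ - 2) ≤ 9 * (e + 3) * (0.8 / r) ^ (e + 1) := by
  refine (latticeSum_add_three_le e _).trans ?_
  rcases Nat.eq_zero_or_pos (⌈0.4 / r⌉₊ - 2) with hzero | hpos
  · rw [hzero, Nat.cast_zero, mul_zero, zero_mul]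
    positivity
  obtain ⟨n, hn⟩ : ∃ n, ⌈0.4 / r⌉₊ = n + 2 := ⟨_, (Nat.sub_add_cancel (by omega)).symm⟩
  have hceil : (n + 2 : ℝ) < 0.4 / r + 1 := by
    exact_mod_cast hn ▸ Nat.ceil_lt_add_one (a := 0.4 / r) (by positivity)
  have hodd : 2 * (n : ℝ) + 1 ≤ 0.8 / r := by
    rw [show 0.8 / r = 2 * (0.4 / r) by ring]
    linarith
  rw [hn, Nat.add_sub_cancel]
  calc 18 * ((e : ℝ) + 3) * n * (2 * n + 1) ^ e
      ≤ 9 * (e + 3) * ((2 * n + 1) ^ e * (2 * n + 1)) := by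
        have : 0 ≤ ((e : ℝ) + 3) * (2 * n + 1) ^ e := by positivity
        linarith
    _ ≤ 9 * (e + 3) * (0.8 / r) ^ (e + 1) := by
        rw [← pow_succ]
        gcongr

lemma mul_sqrt_le_of_pow_add_three_eq (e : ℕ) {r : ℝ} (hδ : 0 ≤ δ) (hr : 0 < r)
    (hrδ : r ^ (e + 3) = δ ^ 2) : δ * √(9 * (e + 3) * (0.8 / r) ^ (e + 1)) ≤ 4.8 * r := by
  rw [← Real.sqrt_sq hδ, ← Real.sqrt_mul (sq_nonneg δ), Real.sqrt_le_left (by positivity)]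
  calc δ ^ 2 * (9 * (e + 3) * (0.8 / r) ^ (e + 1))
      = 9 * r ^ 2 * ((e + 3) * 0.8 ^ (e + 1)) := by
        rw [← hrδ, div_pow, show e + 3 = e + 1 + 2 by ring, pow_add r]
        field_simp
    _ ≤ 9 * r ^ 2 * 2.56 := by
        gcongr
        exact add_three_mul_pow_le e
    _ = (4.8 * r) ^ 2 := by ring

lemma exists_truncationBound_le_of_three_le {d : ℕ} (hd : 3 ≤ d) (hδ : 0 < δ) :
    ∃ n, truncationBound d n δ ≤ 10 * √d * δ ^ (2 / d : ℝ) := by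
  obtain ⟨e, rfl⟩ := Nat.exists_eq_add_of_le' hd
  set r : ℝ := δ ^ (2 / (e + 3 : ℕ) : ℝ) with hr_def
  have hr : 0 < r := Real.rpow_pos_of_pos hδ _
  have hrδ : r ^ (e + 3) = δ ^ 2 := by
    rw [hr_def, ← Real.rpow_natCast, ← Real.rpow_mul hδ.le, div_mul_cancel₀ _ (by positivity),
      Real.rpow_ofNat]
  -- With `n + 2 ≈ 0.4 / r` the smoothing error is about `(π / 0.4) √d r ≤ 7.86 √d r`, which leaves
  -- `2 √d r` for the low frequencies. If `⌈0.4 / r⌉ < 2`, then `n = 0` by truncated subtraction.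
  refine ⟨⌈0.4 / r⌉₊ - 2,
    (truncationBound_le hδ.le (latticeSum_add_three_ceil_le e hr)).trans ?_⟩
  set D := √((e + 3 : ℕ) : ℝ)
  have hceil : 0.4 / r ≤ ((⌈0.4 / r⌉₊ - 2 : ℕ) : ℝ) + 2 :=
    (Nat.le_ceil _).trans (by exact_mod_cast Nat.le_add_of_sub_le le_rfl)
  have hsmooth : D * π / ((⌈0.4 / r⌉₊ - 2 : ℕ) + 2) ≤ 7.854 * (D * r) :=
    calc D * π / ((⌈0.4 / r⌉₊ - 2 : ℕ) + 2) ≤ D * 3.1416 / (0.4 / r) := by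
          gcongr
          exact Real.pi_lt_d4.le
      _ = 7.854 * (D * r) := by
          field_simp
          ring
  have hsqrt := mul_sqrt_le_of_pow_add_three_eq e hδ.le hr hrδ
  have hlow : D / π * (δ * √(9 * (e + 3) * (0.8 / r) ^ (e + 1))) ≤ 2 * (D * r) :=
    calc D / π * (δ * √(9 * (e + 3) * (0.8 / r) ^ (e + 1))) ≤ D / 3 * (4.8 * r) :=
          mul_le_mul (div_le_div_of_nonneg_left (by positivity) three_pos Real.pi_gt_three.le) hsqrt
            (by positivity) (by positivity)
      _ = 1.6 * (D * r) := by ring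
      _ ≤ 2 * (D * r) := by gcongr; norm_num
  have hnonneg : 0 ≤ D * r := by positivity
  linarith

end Optimization

/-- Proposition 6: quantitative bounds on the expected Kantorovich distance between
two random probability measures on `[0,1]^d` whose characteristic functions are
close on the lattice `πℤ^d` in mean square. -/
theorem expected_W1_of_charFun_close {d : ℕ}
    (Ω : Type*) [MeasurableSpace Ω] (P : Measure Ω) [IsProbabilityMeasure P]
    (μ ν : Ω → Measure (Fin d → ℝ))
    (hμmeas : Measurable μ) (hνmeas : Measurable ν)
    (hμprob : ∀ ω, IsProbabilityMeasure (μ ω)) (hνprob : ∀ ω, IsProbabilityMeasure (ν ω))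
    (hμsupp : ∀ ω, μ ω {x | ¬ ∀ i, x i ∈ Set.Icc (0 : ℝ) 1} = 0)
    (hνsupp : ∀ ω, ν ω {x | ¬ ∀ i, x i ∈ Set.Icc (0 : ℝ) 1} = 0)
    {δ : ℝ} (hδ0 : 0 < δ) (hδ2 : δ ≤ 2)
    (hclose : ∀ m : Fin d → ℤ,
      ∫ ω, ‖charFun (μ ω) (fun i => π * m i) - charFun (ν ω) (fun i => π * m i)‖ ^ 2 ∂P
        ≤ δ ^ 2) :
    (d = 1 → ∫⁻ ω, W1 (μ ω) (ν ω) ∂P ≤ ENNReal.ofReal δ) ∧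
    (d = 2 → ∫⁻ ω, W1 (μ ω) (ν ω) ∂P
        ≤ ENNReal.ofReal (5 * δ * Real.sqrt (1 + Real.log (4 / δ ^ 2)))) ∧
    (3 ≤ d → ∫⁻ ω, W1 (μ ω) (ν ω) ∂P
        ≤ ENNReal.ofReal (10 * Real.sqrt d * δ ^ (2 / d : ℝ))) := by
  have bound := lintegral_W1_le_truncationBound hμmeas hνmeas hμprob hνprob hμsupp hνsupp hδ0.le
    hclose
  refine ⟨?_, ?_, fun hd => ?_⟩
  · rintro rfl
    obtain ⟨n, hn⟩ := exists_truncationBound_one_le hδ0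
    exact (bound n).trans (ENNReal.ofReal_le_ofReal hn)
  · rintro rfl
    obtain ⟨n, hn⟩ := exists_truncationBound_two_le hδ0 hδ2
    exact (bound n).trans (ENNReal.ofReal_le_ofReal hn)
  · obtain ⟨n, hn⟩ := exists_truncationBound_le_of_three_le hd hδ0
    exact (bound n).trans (ENNReal.ofReal_le_ofReal hn)
end
end

section
/- (Lower bound, d ≥ 3.) Let d ≥ 3, let X_1,…,X_n be independent random variables with the uniform distribution μ on [0,1]^d, and let μ_n = (1/n)Σ_{k=1}^n δ_{X_k}. There exists a constant c > 0 depending only on d such that for all n ≥ 1, E(W₁(μ_n, μ)) ≥ c/n^{1/d}. -/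
open MeasureTheory ProbabilityTheory Real ENNReal

noncomputable section

/-- The uniform (Lebesgue) probability distribution on the cube `[0,1]^d`. -/
def uniformCube (d : ℕ) : Measure (Fin d → ℝ) :=
  volume.restrict {x | ∀ i, x i ∈ Set.Icc (0 : ℝ) 1}

/-- The empirical measure `(1/n) Σ_k δ_{X_k(ω)}`. -/
def empMeasure {d n : ℕ} {Ω : Type*} [MeasurableSpace Ω]
    (X : Fin n → Ω → (Fin d → ℝ)) (ω : Ω) : Measure (Fin d → ℝ) :=
  (n : ℝ≥0∞)⁻¹ • ∑ k, Measure.dirac (X k ω)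

/-!
A measure carried by `n` points leaves most of the cube far away: the sup-norm balls of radius `r`
around these points have total volume at most `n (2r)^d`, and any coupling has to transport the
remaining mass, at least `1 - n (2r)^d`, over a Euclidean distance at least `r`. Choosing `r` such
that `n (2r)^d = 1/2` gives a lower bound of order `n ^ (-1/d)` for every position of the points,
hence also in expectation.
-/

theorem ofReal_mul_measure_le_transportCost {α : Type*} [MeasurableSpace α] {c : α → α → ℝ}
    {μ ν : Measure α} {S T : Set α} {r : ℝ} (hS : ∀ᵐ x ∂μ, x ∈ S) (hT : MeasurableSet T)
    (hr : ∀ x ∈ S, ∀ y ∈ T, r ≤ c x y) :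
    ENNReal.ofReal r * ν T ≤ transportCost c μ ν := by
  refine le_iInf₂ fun γ ⟨hfst, hsnd⟩ => ?_
  have fst_mem : ∀ᵐ p ∂γ, p.1 ∈ S :=
    ae_of_ae_map measurable_fst.aemeasurable (hfst.symm ▸ hS)
  calc ENNReal.ofReal r * ν T
      = ∫⁻ _ in Prod.snd ⁻¹' T, ENNReal.ofReal r ∂γ := by
        rw [setLIntegral_const, ← hsnd, Measure.map_apply measurable_snd hT]
    _ ≤ ∫⁻ p in Prod.snd ⁻¹' T, ENNReal.ofReal (c p.1 p.2) ∂γ := by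
        refine setLIntegral_mono_ae' (measurable_snd hT) ?_
        filter_upwards [fst_mem] with p hp1 hp2
        exact ENNReal.ofReal_le_ofReal (hr _ hp1 _ hp2)
    _ ≤ ∫⁻ p, ENNReal.ofReal (c p.1 p.2) ∂γ := setLIntegral_le_lintegral _ _

theorem dist_le_euclidDist {d : ℕ} (x y : Fin d → ℝ) : dist x y ≤ euclidDist x y := by
  refine (dist_pi_le_iff (Real.sqrt_nonneg _)).2 fun i => Real.abs_le_sqrt ?_
  exact Finset.single_le_sum (f := fun i => (x i - y i) ^ 2) (fun _ _ => sq_nonneg _)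
    (Finset.mem_univ i)

instance isProbabilityMeasure_uniformCube (d : ℕ) : IsProbabilityMeasure (uniformCube d) where
  measure_univ := by
    have cube_eq : {x : Fin d → ℝ | ∀ i, x i ∈ Set.Icc (0 : ℝ) 1} = Set.Icc 0 1 := by
      ext x
      exact forall_and
    rw [uniformCube, Measure.restrict_apply_univ, cube_eq, Real.volume_Icc_pi]
    simp

theorem ae_empMeasure_mem_range {d n : ℕ} {Ω : Type*} [MeasurableSpace Ω]
    (X : Fin n → Ω → (Fin d → ℝ)) (ω : Ω) :
    ∀ᵐ x ∂empMeasure X ω, x ∈ Set.range fun k => X k ω := by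
  refine Measure.ae_smul_measure ?_ _
  rw [← Measure.sum_fintype, Measure.ae_sum_iff]
  simp

theorem volume_iUnion_ball_pi_le {ι κ : Type*} [Fintype ι] [Fintype κ] (x : κ → ι → ℝ) {r : ℝ}
    (hr : 0 < r) :
    volume (⋃ k, Metric.ball (x k) r) ≤
      ENNReal.ofReal (Fintype.card κ * (2 * r) ^ Fintype.card ι) :=
  calc volume (⋃ k, Metric.ball (x k) r)
      ≤ ∑ k, volume (Metric.ball (x k) r) := measure_iUnion_fintype_le _ _
    _ = ENNReal.ofReal (Fintype.card κ * (2 * r) ^ Fintype.card ι) := by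
        simp only [Real.volume_pi_ball _ hr, Finset.sum_const, Finset.card_univ, nsmul_eq_mul]
        rw [ENNReal.ofReal_mul (Nat.cast_nonneg _), ENNReal.ofReal_natCast]

section FinitelySupported

variable {d : ℕ} {κ : Type*} [Fintype κ]

theorem one_sub_le_uniformCube_compl_iUnion_ball (x : κ → Fin d → ℝ) {r : ℝ} (hr : 0 < r) :
    ENNReal.ofReal (1 - Fintype.card κ * (2 * r) ^ d) ≤
      uniformCube d (⋃ k, Metric.ball (x k) r)ᶜ := by
  have ball_union_le : uniformCube d (⋃ k, Metric.ball (x k) r) ≤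
      ENNReal.ofReal (Fintype.card κ * (2 * r) ^ d) := by
    simpa only [Fintype.card_fin, uniformCube] using
      (Measure.restrict_apply_le _ _).trans (volume_iUnion_ball_pi_le x hr)
  rw [prob_compl_eq_one_sub (MeasurableSet.iUnion fun _ => measurableSet_ball),
    ENNReal.ofReal_sub _ (by positivity), ENNReal.ofReal_one]
  exact tsub_le_tsub_left ball_union_le 1

theorem mul_one_sub_le_W1_uniformCube {x : κ → Fin d → ℝ} {ν : Measure (Fin d → ℝ)}
    (hν : ∀ᵐ y ∂ν, y ∈ Set.range x) {r : ℝ} (hr : 0 < r) :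
    ENNReal.ofReal (r * (1 - Fintype.card κ * (2 * r) ^ d)) ≤ W1 ν (uniformCube d) := by
  have le_euclidDist : ∀ y ∈ Set.range x, ∀ z ∈ (⋃ k, Metric.ball (x k) r)ᶜ,
      r ≤ euclidDist y z := by
    rintro _ ⟨k, rfl⟩ z hz
    have z_notMem_ball : z ∉ Metric.ball (x k) r := fun h => hz (Set.mem_iUnion_of_mem k h)
    rw [Metric.mem_ball', not_lt] at z_notMem_ball
    exact z_notMem_ball.trans (dist_le_euclidDist _ _)
  rw [ENNReal.ofReal_mul hr.le]
  exact (mul_le_mul_right (one_sub_le_uniformCube_compl_iUnion_ball x hr) _).trans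
    (ofReal_mul_measure_le_transportCost hν
      (MeasurableSet.iUnion fun _ => measurableSet_ball).compl le_euclidDist)

end FinitelySupported

theorem W1_lower_bound_high_dim_general (d : ℕ) (hd : d ≠ 0) :
    ∃ c : ℝ, 0 < c ∧
      ∀ (n : ℕ), 1 ≤ n →
      ∀ (x : Fin n → (Fin d → ℝ)) (ν : Measure (Fin d → ℝ)),
        (∀ᵐ y ∂ν, y ∈ Set.range x) →
        ENNReal.ofReal (c / (n : ℝ) ^ (1 / d : ℝ)) ≤ W1 ν (uniformCube d) := by
  refine ⟨(1 / 2 : ℝ) ^ (1 / d : ℝ) / 4, by positivity, fun n hn x ν hν => ?_⟩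
  have n_pos : (0 : ℝ) < n := by exact_mod_cast hn
  set r : ℝ := (1 / 2 / n : ℝ) ^ (1 / d : ℝ) / 2 with hr
  have ball_volumes : n * (2 * r) ^ d = 1 / 2 := by
    rw [hr, mul_div_cancel₀ _ two_ne_zero, one_div (d : ℝ),
      Real.rpow_inv_natCast_pow (by positivity) hd]
    field_simp
  calc ENNReal.ofReal ((1 / 2 : ℝ) ^ (1 / d : ℝ) / 4 / (n : ℝ) ^ (1 / d : ℝ))
      = ENNReal.ofReal (r * (1 - n * (2 * r) ^ d)) := by
        rw [ball_volumes, hr, Real.div_rpow (by norm_num) n_pos.le]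
        ring_nf
    _ ≤ W1 ν (uniformCube d) := by
        simpa only [Fintype.card_fin] using
          mul_one_sub_le_W1_uniformCube hν (show 0 < r by positivity)

/-- Lower bound for `d ≥ 3`: for independent uniform samples on `[0,1]^d`,
`E(W₁(μ_n, μ)) ≥ c/n^{1/d}` with `c > 0` depending only on `d`. -/
theorem W1_lower_bound_high_dim (d : ℕ) (hd : 3 ≤ d) :
    ∃ c : ℝ, 0 < c ∧
      ∀ (n : ℕ), 1 ≤ n →
      ∀ (Ω : Type) (_ : MeasurableSpace Ω) (P : Measure Ω), IsProbabilityMeasure P →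
      ∀ (X : Fin n → Ω → (Fin d → ℝ)),
        iIndepFun X P →
        (∀ k, P.map (X k) = uniformCube d) →
        ENNReal.ofReal (c / (n : ℝ) ^ (1 / d : ℝ))
          ≤ ∫⁻ ω, W1 (empMeasure X ω) (uniformCube d) ∂P := by
  obtain ⟨c, hc, le_W1⟩ := W1_lower_bound_high_dim_general d (by lia)
  refine ⟨c, hc, fun n hn Ω _ P _ X _ _ => ?_⟩
  simpa using lintegral_mono (μ := P) fun ω => le_W1 n hn _ _ (ae_empMeasure_mem_range X ω)
end
end
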